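/- arXiv:1205.7018 — 9 statements merged into one kernel-verified Lean document; each statement's English description precedes it below -/
import Mathlib

section
/- Let ε > 0 and let I ⊆ ℝ be a bounded nondegenerate interval. For every point (x₁,x₂) ∈ ℝ² the following are equivalent: (a) there exists φ ∈ BMO_ε(I) with ⟨φ⟩_I = x₁ and ⟨φ²⟩_I = x₂; (b) x₁² ≤ x₂ ≤ x₁² + ε², i.e. (x₁,x₂) ∈ Ω_ε. Moreover, if x₂ = x₁², then any φ ∈ BMO_ε(I) with ⟨φ⟩_I = x₁ and ⟨φ²⟩_I = x₂ is equal to x₁ almost everywhere on I; consequently, for every f : ℝ → ℝ, B_ε(x₁, x₁²; f) = f(x₁). -/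
open MeasureTheory Set Real

/-- The average of `φ` over the interval with endpoints `a`, `b`. -/
noncomputable def intAvg (φ : ℝ → ℝ) (a b : ℝ) : ℝ := (∫ t in a..b, φ t) / (b - a)

/-- `φ` belongs to the ball of radius `ε` of (quadratic-norm) BMO on the interval `(l, r)`. -/
def memBMOe (ε l r : ℝ) (φ : ℝ → ℝ) : Prop :=
  IntegrableOn φ (Ioo l r) ∧
  IntegrableOn (fun t => (φ t) ^ 2) (Ioo l r) ∧
  ∀ c d : ℝ, l ≤ c → c < d → d ≤ r →
    intAvg (fun t => (φ t) ^ 2) c d - (intAvg φ c d) ^ 2 ≤ ε ^ 2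

/-- The Bellman function, computed with the interval `I = (0,1)`
(it does not depend on the choice of the interval). -/
noncomputable def bellmanFn (ε : ℝ) (f : ℝ → ℝ) (x₁ x₂ : ℝ) : ℝ :=
  sSup {y | ∃ φ : ℝ → ℝ, memBMOe ε 0 1 φ ∧
    IntegrableOn (fun t => f (φ t)) (Ioo 0 1) ∧
    intAvg φ 0 1 = x₁ ∧ intAvg (fun t => (φ t) ^ 2) 0 1 = x₂ ∧
    y = intAvg (fun t => f (φ t)) 0 1}


lemma aux_ii {g : ℝ → ℝ} {l r : ℝ} (hlr : l < r) (h : IntegrableOn g (Ioo l r)) :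
    IntervalIntegrable g volume l r := by
  rw [intervalIntegrable_iff_integrableOn_Ioc_of_le hlr.le]
  exact (integrableOn_Ioc_iff_integrableOn_Ioo (by simp)).2 h

lemma aux_sq {φ : ℝ → ℝ} {c d : ℝ} (m : ℝ) (h1 : IntervalIntegrable φ volume c d)
    (h2 : IntervalIntegrable (fun t => φ t ^ 2) volume c d) :
    ∫ t in c..d, (φ t - m) ^ 2 =
      (∫ t in c..d, φ t ^ 2) - 2 * m * (∫ t in c..d, φ t) + m ^ 2 * (d - c) := by
  have e : (fun t => (φ t - m) ^ 2) = fun t => (φ t ^ 2 - 2 * m * φ t) + m ^ 2 := by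
    funext t; ring
  rw [e, intervalIntegral.integral_add (h2.sub (h1.const_mul _)) (by simp),
    intervalIntegral.integral_sub h2 (h1.const_mul _), intervalIntegral.integral_const_mul]
  simp [mul_comm]

lemma aux_avg {φ : ℝ → ℝ} {l r x₁ x₂ : ℝ} (hlr : l < r) (h1 : IntegrableOn φ (Ioo l r))
    (h2 : IntegrableOn (fun t => φ t ^ 2) (Ioo l r)) (e1 : intAvg φ l r = x₁)
    (e2 : intAvg (fun t => φ t ^ 2) l r = x₂) :
    ∫ t in l..r, (φ t - x₁) ^ 2 = (r - l) * (x₂ - x₁ ^ 2) := by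
  have hp : r - l ≠ 0 := (sub_pos.2 hlr).ne'
  rw [aux_sq x₁ (aux_ii hlr h1) (aux_ii hlr h2)]
  unfold intAvg at e1 e2
  rw [div_eq_iff hp] at e1 e2
  rw [e1, e2]; ring

lemma aux_ae {ε : ℝ} {φ : ℝ → ℝ} {l r x₁ : ℝ} (hlr : l < r) (h : memBMOe ε l r φ)
    (e1 : intAvg φ l r = x₁)
    (e2 : intAvg (fun t => φ t ^ 2) l r = x₁ ^ 2) :
    ∀ᵐ t ∂volume.restrict (Ioo l r), φ t = x₁ := by
  have h0 := aux_avg hlr h.1 h.2.1 e1 e2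
  rw [sub_self, mul_zero, intervalIntegral.integral_of_le hlr.le, integral_Ioc_eq_integral_Ioo]
    at h0
  have hi : Integrable (fun t => (φ t - x₁) ^ 2) (volume.restrict (Ioo l r)) := by
    have e : (fun t => (φ t - x₁) ^ 2) = fun t => (φ t ^ 2 - 2 * x₁ * φ t) + x₁ ^ 2 := by
      funext t; ring
    rw [e]
    exact (Integrable.sub h.2.1 (Integrable.const_mul h.1 _)).add (integrable_const _)
  rw [integral_eq_zero_iff_of_nonneg (fun t => sq_nonneg _) hi] at h0
  filter_upwards [h0] with t ht
  have : φ t - x₁ = 0 := by simpa using ht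
  linarith

lemma aux_const (m l r : ℝ) (hlr : l < r) : intAvg (fun _ => m) l r = m := by
  have hp : r - l ≠ 0 := (sub_pos.2 hlr).ne'
  simp [intAvg]; field_simp

lemma aux_ex {ε : ℝ} {l r x₁ s : ℝ} (hlr : l < r) (hs : s ^ 2 ≤ ε ^ 2) :
    ∃ φ : ℝ → ℝ, memBMOe ε l r φ ∧ intAvg φ l r = x₁ ∧
        intAvg (fun t => (φ t) ^ 2) l r = x₁ ^ 2 + s ^ 2 := by
  set φ : ℝ → ℝ := fun t => if t ≤ (l + r) / 2 then x₁ + s else x₁ - s with hφ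
  have hm : Measurable φ := Measurable.ite measurableSet_Iic measurable_const measurable_const
  have hsq : (fun t => φ t ^ 2) = fun t => 2 * x₁ * φ t + (s ^ 2 - x₁ ^ 2) := by
    funext t; simp only [hφ]; split_ifs <;> ring
  have hb : ∀ t, ‖φ t‖ ≤ |x₁| + |s| := by
    intro t; simp only [hφ, Real.norm_eq_abs]; split_ifs
    · exact abs_add_le _ _
    · exact abs_sub _ _
  have hion : ∀ c d, IntegrableOn φ (Ioo c d) := fun c d =>
    Integrable.of_bound hm.aestronglyMeasurable _ (Filter.Eventually.of_forall hb)
  have hii : ∀ c d, c < d → IntervalIntegrable φ volume c d := fun c d h => aux_ii h (hion c d)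
  have key : ∀ c d, c < d → intAvg (fun t => φ t ^ 2) c d
      = 2 * x₁ * intAvg φ c d + (s ^ 2 - x₁ ^ 2) := by
    intro c d h
    have hp : d - c ≠ 0 := (sub_pos.2 h).ne'
    unfold intAvg
    rw [hsq, intervalIntegral.integral_add ((hii c d h).const_mul _) (by simp),
      intervalIntegral.integral_const_mul]
    simp only [intervalIntegral.integral_const, smul_eq_mul]
    field_simp
  have hl : l < (l + r) / 2 := by linarith
  have hr : (l + r) / 2 < r := by linarith
  have havg : intAvg φ l r = x₁ := by
    have hp : r - l ≠ 0 := (sub_pos.2 hlr).ne'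
    unfold intAvg
    rw [← intervalIntegral.integral_add_adjacent_intervals (hii _ _ hl) (hii _ _ hr)]
    have i1 : ∫ t in l..((l + r) / 2), φ t = ∫ t in l..((l + r) / 2), (x₁ + s) := by
      rw [intervalIntegral.integral_of_le hl.le, intervalIntegral.integral_of_le hl.le]
      refine setIntegral_congr_fun measurableSet_Ioc fun t ht => ?_
      simp only [hφ]; rw [if_pos ht.2]
    have i2 : ∫ t in ((l + r) / 2)..r, φ t = ∫ t in ((l + r) / 2)..r, (x₁ - s) := by
      rw [intervalIntegral.integral_of_le hr.le, intervalIntegral.integral_of_le hr.le]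
      refine setIntegral_congr_fun measurableSet_Ioc fun t ht => ?_
      simp only [hφ]; rw [if_neg (not_le.2 ht.1)]
    rw [i1, i2, div_eq_iff hp]
    simp only [intervalIntegral.integral_const, smul_eq_mul]
    ring
  refine ⟨φ, ⟨hion l r, ?_, ?_⟩, havg, ?_⟩
  · rw [hsq]
    exact (Integrable.const_mul (hion l r) _).add (integrable_const _)
  · intro c d _ h _
    rw [key c d h]
    nlinarith [sq_nonneg (intAvg φ c d - x₁)]
  · rw [key l r hlr, havg]; ring

theorem stmt0 (ε : ℝ) (hε : 0 < ε) (l r : ℝ) (hlr : l < r) (x₁ x₂ : ℝ) :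
    ((∃ φ : ℝ → ℝ, memBMOe ε l r φ ∧ intAvg φ l r = x₁ ∧
        intAvg (fun t => (φ t) ^ 2) l r = x₂) ↔
      (x₁ ^ 2 ≤ x₂ ∧ x₂ ≤ x₁ ^ 2 + ε ^ 2)) ∧
    (x₂ = x₁ ^ 2 →
      ∀ φ : ℝ → ℝ, memBMOe ε l r φ → intAvg φ l r = x₁ →
        intAvg (fun t => (φ t) ^ 2) l r = x₂ →
        ∀ᵐ t ∂volume.restrict (Ioo l r), φ t = x₁) ∧
    (∀ f : ℝ → ℝ, bellmanFn ε f x₁ (x₁ ^ 2) = f x₁) := by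
  refine ⟨⟨?_, ?_⟩, ?_, ?_⟩
  · rintro ⟨φ, h, e1, e2⟩
    constructor
    · have h0 := aux_avg hlr h.1 h.2.1 e1 e2
      have h1 : 0 ≤ ∫ t in l..r, (φ t - x₁) ^ 2 :=
        intervalIntegral.integral_nonneg hlr.le fun t _ => sq_nonneg _
      rw [h0] at h1
      have := nonneg_of_mul_nonneg_right h1 (sub_pos.2 hlr)
      linarith
    · have := h.2.2 l r le_rfl hlr le_rfl
      rw [e1, e2] at this
      linarith
  · rintro ⟨h1, h2⟩
    have hs : √(x₂ - x₁ ^ 2) ^ 2 = x₂ - x₁ ^ 2 := Real.sq_sqrt (by linarith)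
    obtain ⟨φ, h, e1, e2⟩ := aux_ex (ε := ε) (x₁ := x₁) (s := √(x₂ - x₁ ^ 2)) hlr
      (by rw [hs]; linarith)
    exact ⟨φ, h, e1, by rw [e2, hs]; ring⟩
  · rintro rfl φ h e1 e2
    exact aux_ae hlr h e1 e2
  · intro f
    unfold bellmanFn
    refine Eq.trans (congrArg sSup ?_) (csSup_singleton (f x₁))
    ext y
    simp only [mem_setOf_eq, mem_singleton_iff]
    constructor
    · rintro ⟨φ, h, -, e1, e2, rfl⟩
      have ha := aux_ae one_pos h e1 e2
      rw [← aux_const (f x₁) 0 1 one_pos]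
      unfold intAvg
      congr 1
      rw [intervalIntegral.integral_of_le zero_le_one, intervalIntegral.integral_of_le zero_le_one,
        integral_Ioc_eq_integral_Ioo, integral_Ioc_eq_integral_Ioo]
      refine integral_congr_ae ?_
      filter_upwards [ha] with t ht
      rw [ht]
    · rintro rfl
      refine ⟨fun _ => x₁, ⟨integrable_const _, integrable_const _, ?_⟩, integrable_const _,
        aux_const _ _ _ one_pos, aux_const _ _ _ one_pos, (aux_const _ _ _ one_pos).symm⟩
      intro c d _ h _
      rw [aux_const _ _ _ h, aux_const _ _ _ h]
      nlinarith
end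

section
/- Let 0 < ε < ε₁. Then there exists δ ∈ (0, 1/2], depending only on the ratio ε/ε₁, such that for every bounded nondegenerate interval I ⊆ ℝ and every φ ∈ BMO_ε(I) there is a partition of I into two adjacent subintervals I₋ and I₊ (with I = I₋ ∪ I₊ and disjoint interiors) satisfying δ ≤ |I₋|/|I| ≤ 1 − δ, such that the straight-line segment with endpoints x⁻ = (⟨φ⟩_{I₋}, ⟨φ²⟩_{I₋}) and x⁺ = (⟨φ⟩_{I₊}, ⟨φ²⟩_{I₊}) lies entirely inside the parabolic strip Ω_{ε₁}. -/
open MeasureTheory Set Real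

/-- The parabolic strip `Ω_ε`. -/
def parabStrip (ε : ℝ) : Set (ℝ × ℝ) := {x | x.1 ^ 2 ≤ x.2 ∧ x.2 ≤ x.1 ^ 2 + ε ^ 2}

lemma quad_max (h0 h1 D E t0 : ℝ) (ht0 : 0 < t0) (ht1 : t0 < 1)
    (hE : (1 - t0) * h0 + t0 * h1 + t0 * (1 - t0) * D ^ 2 = E)
    (hm : ∀ t ∈ Icc (0 : ℝ) 1, (1 - t) * h0 + t * h1 + t * (1 - t) * D ^ 2 ≤ E) (t : ℝ) :
    (1 - t) * h0 + t * h1 + t * (1 - t) * D ^ 2 = E - (t - t0) ^ 2 * D ^ 2 := by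
  have hd : HasDerivAt (fun t : ℝ => (1 - t) * h0 + t * h1 + t * (1 - t) * D ^ 2)
      (h1 - h0 + (1 - 2 * t0) * D ^ 2) t0 := by
    have h1' := hasDerivAt_id t0
    have h2 := (h1'.const_sub 1)
    have := ((h2.mul_const h0).add (h1'.mul_const h1)).add ((h1'.mul h2).mul_const (D ^ 2))
    convert! this using 1
    simp only [id]
    ring
  have hl : IsLocalMax (fun t : ℝ => (1 - t) * h0 + t * h1 + t * (1 - t) * D ^ 2) t0 := by
    filter_upwards [Icc_mem_nhds ht0 ht1] with x hx
    rw [hE]; exact hm x hx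
  have hc := hl.hasDerivAt_eq_zero hd
  rw [← hE]
  linear_combination (t - t0) * hc

lemma coreA (ε ε₁ a b : ℝ) (hε : 0 < ε) (hεε : ε < ε₁) (u v u' v' : ℝ → ℝ)
    (hu : ContinuousOn u (Icc 0 (1 / 2))) (hv : ContinuousOn v (Icc 0 (1 / 2)))
    (ha : ∀ s ∈ Icc (0 : ℝ) (1 / 2), a = (1 - s) * u s + s * u' s)
    (hb : ∀ s ∈ Icc (0 : ℝ) (1 / 2), b = (1 - s) * v s + s * v' s)
    (hab : b - a ^ 2 ≤ ε ^ 2)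
    (hlo : ∀ s ∈ Icc (0 : ℝ) (1 / 2), u s ^ 2 ≤ v s)
    (hhi : ∀ s ∈ Icc (0 : ℝ) (1 / 2), v s - u s ^ 2 ≤ ε ^ 2)
    (hlo' : ∀ s ∈ Ioc (0 : ℝ) (1 / 2), u' s ^ 2 ≤ v' s)
    (hbad : ∃ t ∈ Icc (0 : ℝ) (1 / 2), ε₁ ^ 2 ≤
      (1 - t) * v (1 / 2) + t * v' (1 / 2) - ((1 - t) * u (1 / 2) + t * u' (1 / 2)) ^ 2) :
    ∃ s ∈ Ioc (0 : ℝ) (1 / 2), ε₁ ^ 2 - ε ^ 2 ≤ 2 * s * ε ^ 2 ∧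
      ∀ t : ℝ, (1 - t) * v s + t * v' s - ((1 - t) * u s + t * u' s) ^ 2 ≤ ε₁ ^ 2 := by
  have hsq : ε ^ 2 < ε₁ ^ 2 := by nlinarith
  let F : ℝ × ℝ → ℝ := fun p =>
    (1 - p.2) * b + p.2 * v p.1 - ((1 - p.2) * a + p.2 * u p.1) ^ 2
  let K : Set (ℝ × ℝ) := Icc (0 : ℝ) (1 / 2) ×ˢ Icc (0 : ℝ) 1
  have hK : IsCompact K := isCompact_Icc.prod isCompact_Icc
  have hF : ContinuousOn F K := by
    have h1 : ContinuousOn (fun p : ℝ × ℝ => u p.1) K :=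
      hu.comp continuousOn_fst (fun p hp => hp.1)
    have h2 : ContinuousOn (fun p : ℝ × ℝ => v p.1) K :=
      hv.comp continuousOn_fst (fun p hp => hp.1)
    have h3 : ContinuousOn (fun p : ℝ × ℝ => p.2) K := continuousOn_snd
    have h4 : ContinuousOn (fun p : ℝ × ℝ => 1 - p.2) K := continuousOn_const.sub h3
    exact ((h4.mul continuousOn_const).add (h3.mul h2)).sub
      (((h4.mul continuousOn_const).add (h3.mul h1)).pow 2)
  have hS : IsCompact (K ∩ F ⁻¹' (Ici (ε₁ ^ 2))) :=
    hK.of_isClosed_subset (hF.preimage_isClosed_of_isClosed hK.isClosed isClosed_Ici)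
      inter_subset_left
  have hne : (K ∩ F ⁻¹' (Ici (ε₁ ^ 2))).Nonempty := by
    obtain ⟨t, ht, hb1⟩ := hbad
    have hh : (1 / 2 : ℝ) ∈ Icc (0 : ℝ) (1 / 2) := by constructor <;> norm_num
    refine ⟨(1 / 2, 1 - 2 * t), ⟨hh, ?_, ?_⟩, ?_⟩
    · simp only; linarith [ht.2]
    · simp only; linarith [ht.1]
    · have e1 := ha _ hh
      have e2 := hb _ hh
      simp only [mem_preimage, mem_Ici, F]
      rw [e1, e2]
      refine hb1.trans (le_of_eq ?_)
      ring
  obtain ⟨⟨s, t0⟩, ⟨⟨hs, ht0⟩, hFs⟩, hmin⟩ := hS.exists_isMinOn hne continuousOn_fst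
  simp only at hs ht0
  simp only [mem_preimage, mem_Ici] at hFs
  have hs0 : 0 < s := by
    rcases hs.1.eq_or_lt with h | h
    · exfalso
      subst h
      have e1 := ha _ hs
      have e2 := hb _ hs
      simp only [F] at hFs
      have e3 : u 0 = a := by linarith
      have e4 : v 0 = b := by linarith
      rw [e3, e4] at hFs
      nlinarith
    · exact h
  have hbelow : ∀ t ∈ Icc (0 : ℝ) 1, F (s, t) ≤ ε₁ ^ 2 := by
    intro t ht
    have hc : ContinuousOn (fun x => F (x, t)) (Icc 0 s) := by
      refine hF.comp (by fun_prop) ?_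
      intro x hx
      exact ⟨⟨hx.1, hx.2.trans hs.2⟩, ht⟩
    have hcl : s ∈ closure (Ioo 0 s) := by
      rw [closure_Ioo hs0.ne]; exact ⟨hs0.le, le_rfl⟩
    have hcw : ContinuousWithinAt (fun x => F (x, t)) (Ioo 0 s) s :=
      (hc s ⟨hs0.le, le_rfl⟩).mono Ioo_subset_Icc_self
    refine hcw.closure_le hcl (continuousWithinAt_const (b := ε₁ ^ 2)) ?_
    intro x hx
    by_contra hcon
    have : s ≤ x := hmin (show (x, t) ∈ K ∩ F ⁻¹' (Ici (ε₁ ^ 2)) from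
      ⟨⟨⟨hx.1.le, hx.2.le.trans hs.2⟩, ht⟩, (not_le.mp hcon).le⟩)
    linarith [hx.2]
  have hFeq : ∀ t, F (s, t) = (1 - t) * (b - a ^ 2) + t * (v s - u s ^ 2)
      + t * (1 - t) * (u s - a) ^ 2 := by
    intro t; simp only [F]; ring
  have h0 : 0 < t0 := by
    rcases ht0.1.eq_or_lt with h | h
    · exfalso; rw [hFeq, ← h] at hFs; linarith
    · exact h
  have h1 : t0 < 1 := by
    rcases ht0.2.eq_or_lt with h | h
    · exfalso; rw [hFeq, h] at hFs; linarith [hhi s hs]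
    · exact h
  have hq := quad_max (b - a ^ 2) (v s - u s ^ 2) (u s - a) (ε₁ ^ 2) t0 h0 h1
    (by rw [← hFeq]; exact le_antisymm (hbelow t0 ht0) hFs)
    (fun t ht => by rw [← hFeq]; exact hbelow t ht)
  have e1 := ha _ hs
  have e2 := hb _ hs
  refine ⟨s, ⟨hs0, hs.2⟩, ?_, ?_⟩
  · have hq0 := hq 0
    have hD : ε₁ ^ 2 - ε ^ 2 ≤ (u s - a) ^ 2 := by
      have : t0 ^ 2 * (u s - a) ^ 2 ≤ 1 * (u s - a) ^ 2 := by
        gcongr; nlinarith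
      nlinarith
    have k1 := hlo s hs
    have k2 := hlo' s ⟨hs0, hs.2⟩
    have hs2 := hs.2
    set d := u' s - u s with hd
    have hDd : u s - a = - (s * d) := by rw [e1, hd]; ring
    have hh0 : b - a ^ 2 = (1 - s) * (v s - u s ^ 2) + s * (v' s - u' s ^ 2)
        + s * (1 - s) * d ^ 2 := by
      rw [e1, e2, hd]; ring
    have k3 : s * (1 - s) * d ^ 2 ≤ ε ^ 2 := by
      have := mul_nonneg (show 0 ≤ 1 - s by linarith) (sub_nonneg.2 k1)
      have := mul_nonneg hs0.le (sub_nonneg.2 k2)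
      linarith
    have k4 : s * d ^ 2 ≤ 2 * ε ^ 2 := by
      have : 0 ≤ s * d ^ 2 := by positivity
      nlinarith
    rw [hDd] at hD
    nlinarith
  · intro t
    have := hq (1 - t / s)
    rw [← hFeq] at this
    have e : F (s, 1 - t / s) =
        (1 - t) * v s + t * v' s - ((1 - t) * u s + t * u' s) ^ 2 := by
      simp only [F]; rw [e1, e2]; field_simp; ring
    rw [← e, this]
    have : 0 ≤ (1 - t / s - t0) ^ 2 * (u s - a) ^ 2 := by positivity
    linarith

lemma avg_sq_le (φ : ℝ → ℝ) (c d : ℝ) (hcd : c < d) (h1 : IntervalIntegrable φ volume c d)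
    (h2 : IntervalIntegrable (fun t => φ t ^ 2) volume c d) :
    intAvg φ c d ^ 2 ≤ intAvg (fun t => φ t ^ 2) c d := by
  set m := intAvg φ c d with hm
  have hpos : 0 ≤ ∫ t in c..d, (φ t - m) ^ 2 :=
    intervalIntegral.integral_nonneg hcd.le (fun t _ => sq_nonneg _)
  have he : ∫ t in c..d, (φ t - m) ^ 2 =
      (∫ t in c..d, φ t ^ 2) - 2 * m * (∫ t in c..d, φ t) + (d - c) * m ^ 2 := by
    have : (fun t => (φ t - m) ^ 2) = fun t => φ t ^ 2 - 2 * m * φ t + m ^ 2 := by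
      funext t; ring
    rw [this, intervalIntegral.integral_add (h2.sub (h1.const_mul _)) (by simp),
      intervalIntegral.integral_sub h2 (h1.const_mul _)]
    simp
  have hdc : 0 < d - c := by linarith
  have hi : ∫ t in c..d, φ t = m * (d - c) := by
    rw [hm, intAvg]; field_simp
  rw [he, hi] at hpos
  unfold intAvg
  rw [le_div_iff₀ hdc]
  nlinarith

lemma avg_split (f : ℝ → ℝ) (l m r s : ℝ) (hlr : l < r) (hm : m = l + s * (r - l))
    (h1 : IntervalIntegrable f volume l m) (h2 : IntervalIntegrable f volume m r) :
    intAvg f l r = s * intAvg f l m + (1 - s) * intAvg f m r := by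
  have hadd := intervalIntegral.integral_add_adjacent_intervals h1 h2
  have e1 : s * intAvg f l m = (∫ t in l..m, f t) / (r - l) := by
    rcases eq_or_ne s 0 with h | h
    · have : m = l := by rw [hm, h]; ring
      simp [h, this]
    · have h3 : r - l ≠ 0 := by linarith
      have : m - l = s * (r - l) := by rw [hm]; ring
      rw [intAvg, this]; field_simp
  have e2 : (1 - s) * intAvg f m r = (∫ t in m..r, f t) / (r - l) := by
    rcases eq_or_ne (1 - s) 0 with h | h
    · have h' : s = 1 := by linarith
      have : m = r := by rw [hm, h']; ring
      simp [h, this]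
    · have h3 : r - l ≠ 0 := by linarith
      have : r - m = (1 - s) * (r - l) := by rw [hm]; ring
      rw [intAvg, this]; field_simp
  rw [e1, e2, ← add_div, hadd, intAvg]

lemma avg_cont_left (f : ℝ → ℝ) (l r : ℝ) (hlr : l < r)
    (hf : IntegrableOn f (Icc l r)) :
    ContinuousOn (fun s => intAvg f l (r - s * (r - l))) (Icc 0 (1 / 2)) := by
  have hp := intervalIntegral.continuousOn_primitive_interval
    (μ := volume) (f := f) (a := l) (b := r) (by rwa [uIcc_of_le hlr.le])
  rw [uIcc_of_le hlr.le] at hp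
  unfold intAvg
  refine ContinuousOn.div (hp.comp (by fun_prop) ?_) (by fun_prop) ?_
  · intro s hs; constructor <;> nlinarith [hs.1, hs.2]
  · intro s hs; nlinarith [hs.1, hs.2]

lemma avg_cont_right (f : ℝ → ℝ) (l r : ℝ) (hlr : l < r)
    (hf : IntegrableOn f (Icc l r)) :
    ContinuousOn (fun s => intAvg f (l + s * (r - l)) r) (Icc 0 (1 / 2)) := by
  have hp := intervalIntegral.continuousOn_primitive_interval_left
    (μ := volume) (f := f) (a := l) (b := r) (by rwa [uIcc_of_le hlr.le])
  rw [uIcc_of_le hlr.le] at hp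
  unfold intAvg
  refine ContinuousOn.div (hp.comp (by fun_prop) ?_) (by fun_prop) ?_
  · intro s hs; constructor <;> nlinarith [hs.1, hs.2]
  · intro s hs; nlinarith [hs.1, hs.2]

lemma seg_strip (E p q p' q' : ℝ) (h : p ^ 2 ≤ q) (h' : p' ^ 2 ≤ q')
    (hle : ∀ t ∈ Icc (0 : ℝ) 1, (1 - t) * q + t * q' - ((1 - t) * p + t * p') ^ 2 ≤ E ^ 2) :
    segment ℝ (p, q) (p', q') ⊆ parabStrip E := by
  rintro x ⟨α, t, hα, ht, hsum, rfl⟩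
  have hα' : α = 1 - t := by linarith
  subst hα'
  have := hle t ⟨ht, by linarith⟩
  simp only [parabStrip, mem_ofPred_eq, Prod.smul_mk, Prod.mk_add_mk, smul_eq_mul]
  constructor
  · have e1 := mul_nonneg hα (sub_nonneg.2 h)
    have e2 := mul_nonneg ht (sub_nonneg.2 h')
    have e3 := mul_nonneg (mul_nonneg hα ht) (sq_nonneg (p - p'))
    nlinarith
  · linarith

theorem stmt1 :
    ∃ δ : ℝ → ℝ, ∀ ε ε₁ : ℝ, 0 < ε → ε < ε₁ →
      δ (ε / ε₁) ∈ Ioc (0 : ℝ) (1 / 2) ∧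
      ∀ l r : ℝ, l < r → ∀ φ : ℝ → ℝ, memBMOe ε l r φ →
        ∃ m : ℝ, l < m ∧ m < r ∧
          δ (ε / ε₁) ≤ (m - l) / (r - l) ∧ (m - l) / (r - l) ≤ 1 - δ (ε / ε₁) ∧
          segment ℝ (intAvg φ l m, intAvg (fun t => (φ t) ^ 2) l m)
              (intAvg φ m r, intAvg (fun t => (φ t) ^ 2) m r) ⊆ parabStrip ε₁ := by
  refine ⟨fun κ => min (1 / 2) ((1 / κ ^ 2 - 1) / 2), ?_⟩
  intro ε ε₁ hε hεε
  have hε₁ : 0 < ε₁ := hε.trans hεε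
  have hsq : ε ^ 2 < ε₁ ^ 2 := by nlinarith
  have hδe : (1 / (ε / ε₁) ^ 2 - 1) / 2 = (ε₁ ^ 2 - ε ^ 2) / (2 * ε ^ 2) := by
    field_simp
  simp only [hδe]
  have hδpos : 0 < (ε₁ ^ 2 - ε ^ 2) / (2 * ε ^ 2) := by
    apply div_pos <;> [linarith; positivity]
  set δ := min (1 / 2) ((ε₁ ^ 2 - ε ^ 2) / (2 * ε ^ 2)) with hδ
  have hδ2 : δ ≤ 1 / 2 := min_le_left _ _
  have hδs : ∀ s, ε₁ ^ 2 - ε ^ 2 ≤ 2 * s * ε ^ 2 → δ ≤ s := by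
    intro s hs
    refine (min_le_right _ _).trans ?_
    rw [div_le_iff₀ (by positivity)]; linarith
  refine ⟨⟨lt_min (by norm_num) hδpos, hδ2⟩, ?_⟩
  intro l r hlr φ ⟨hi1, hi2, hb⟩
  have hrl : 0 < r - l := by linarith
  have hj1 : IntegrableOn φ (Icc l r) := by rwa [integrableOn_Icc_iff_integrableOn_Ioo]
  have hj2 : IntegrableOn (fun t => φ t ^ 2) (Icc l r) := by
    rwa [integrableOn_Icc_iff_integrableOn_Ioo]
  have ii1 : ∀ c d, l ≤ c → c ≤ d → d ≤ r → IntervalIntegrable φ volume c d := by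
    intro c d h1 h2 h3
    rw [intervalIntegrable_iff_integrableOn_Icc_of_le h2]
    exact hj1.mono_set (Icc_subset_Icc h1 h3)
  have ii2 : ∀ c d, l ≤ c → c ≤ d → d ≤ r →
      IntervalIntegrable (fun t => φ t ^ 2) volume c d := by
    intro c d h1 h2 h3
    rw [intervalIntegrable_iff_integrableOn_Icc_of_le h2]
    exact hj2.mono_set (Icc_subset_Icc h1 h3)
  have hcs : ∀ c d, l ≤ c → c < d → d ≤ r →
      intAvg φ c d ^ 2 ≤ intAvg (fun t => φ t ^ 2) c d := fun c d h1 h2 h3 =>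
    avg_sq_le φ c d h2 (ii1 c d h1 h2.le h3) (ii2 c d h1 h2.le h3)
  set ψ : ℝ → ℝ := fun t => φ t ^ 2 with hψ
  by_cases hgood : ∀ t ∈ Icc (0 : ℝ) 1,
      (1 - t) * intAvg ψ l (l + 1 / 2 * (r - l)) + t * intAvg ψ (l + 1 / 2 * (r - l)) r
       - ((1 - t) * intAvg φ l (l + 1 / 2 * (r - l)) +
          t * intAvg φ (l + 1 / 2 * (r - l)) r) ^ 2 ≤ ε₁ ^ 2
  · have e : (l + 1 / 2 * (r - l) - l) / (r - l) = 1 / 2 := by field_simp; ring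
    refine ⟨l + 1 / 2 * (r - l), by linarith, by linarith, by rw [e]; exact hδ2,
      by rw [e]; linarith, ?_⟩
    exact seg_strip _ _ _ _ _ (hcs _ _ le_rfl (by linarith) (by linarith))
      (hcs _ _ (by linarith) (by linarith) le_rfl) hgood
  push Not at hgood
  obtain ⟨t, ht, hbad⟩ := hgood
  have hab := hb l r le_rfl hlr le_rfl
  rcases le_total t (1 / 2) with htt | htt
  · -- left part is bad
    have hmem : ∀ s ∈ Icc (0 : ℝ) (1 / 2), l < r - s * (r - l) ∧ r - s * (r - l) ≤ r := by
      intro s hs; constructor <;> nlinarith [hs.1, hs.2]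
    obtain ⟨s, hs, hs1, hs2⟩ := coreA ε ε₁ (intAvg φ l r) (intAvg ψ l r) hε hεε
      (fun s => intAvg φ l (r - s * (r - l))) (fun s => intAvg ψ l (r - s * (r - l)))
      (fun s => intAvg φ (r - s * (r - l)) r) (fun s => intAvg ψ (r - s * (r - l)) r)
      (avg_cont_left φ l r hlr hj1) (avg_cont_left ψ l r hlr hj2)
      (fun s hs => by
        have := avg_split φ l (r - s * (r - l)) r (1 - s) hlr (by ring)
          (ii1 _ _ le_rfl (hmem s hs).1.le (hmem s hs).2)
          (ii1 _ _ (hmem s hs).1.le (hmem s hs).2 le_rfl)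
        rw [this]; ring)
      (fun s hs => by
        have := avg_split ψ l (r - s * (r - l)) r (1 - s) hlr (by ring)
          (ii2 _ _ le_rfl (hmem s hs).1.le (hmem s hs).2)
          (ii2 _ _ (hmem s hs).1.le (hmem s hs).2 le_rfl)
        rw [this]; ring)
      hab
      (fun s hs => hcs _ _ le_rfl (hmem s hs).1 (hmem s hs).2)
      (fun s hs => hb _ _ le_rfl (hmem s hs).1 (hmem s hs).2)
      (fun s hs => hcs _ _ (hmem s ⟨hs.1.le, hs.2⟩).1.le
        (by nlinarith [hs.1]) le_rfl)
      ⟨t, ⟨ht.1, htt⟩, by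
        have e : r - 1 / 2 * (r - l) = l + 1 / 2 * (r - l) := by ring
        simp only [e]; exact hbad.le⟩
    have hm := hmem s ⟨hs.1.le, hs.2⟩
    have hm2 : r - s * (r - l) < r := by nlinarith [hs.1]
    have e : (r - s * (r - l) - l) / (r - l) = 1 - s := by field_simp; ring
    have := hδs s hs1
    refine ⟨r - s * (r - l), hm.1, hm2, by rw [e]; linarith [hs.2], by rw [e]; linarith, ?_⟩
    exact seg_strip _ _ _ _ _ (hcs _ _ le_rfl hm.1 hm.2) (hcs _ _ hm.1.le hm2 le_rfl)
      (fun t _ => hs2 t)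
  · have hmem : ∀ s ∈ Icc (0 : ℝ) (1 / 2), l ≤ l + s * (r - l) ∧ l + s * (r - l) < r := by
      intro s hs; constructor <;> nlinarith [hs.1, hs.2]
    obtain ⟨s, hs, hs1, hs2⟩ := coreA ε ε₁ (intAvg φ l r) (intAvg ψ l r) hε hεε
      (fun s => intAvg φ (l + s * (r - l)) r) (fun s => intAvg ψ (l + s * (r - l)) r)
      (fun s => intAvg φ l (l + s * (r - l))) (fun s => intAvg ψ l (l + s * (r - l)))
      (avg_cont_right φ l r hlr hj1) (avg_cont_right ψ l r hlr hj2)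
      (fun s hs => by
        have := avg_split φ l (l + s * (r - l)) r s hlr rfl
          (ii1 _ _ le_rfl (hmem s hs).1 (hmem s hs).2.le)
          (ii1 _ _ (hmem s hs).1 (hmem s hs).2.le le_rfl)
        rw [this]; ring)
      (fun s hs => by
        have := avg_split ψ l (l + s * (r - l)) r s hlr rfl
          (ii2 _ _ le_rfl (hmem s hs).1 (hmem s hs).2.le)
          (ii2 _ _ (hmem s hs).1 (hmem s hs).2.le le_rfl)
        rw [this]; ring)
      hab
      (fun s hs => hcs _ _ (hmem s hs).1 (hmem s hs).2 le_rfl)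
      (fun s hs => hb _ _ (hmem s hs).1 (hmem s hs).2 le_rfl)
      (fun s hs => hcs _ _ le_rfl (by nlinarith [hs.1]) (hmem s ⟨hs.1.le, hs.2⟩).2.le)
      ⟨1 - t, ⟨by linarith [ht.2], by linarith⟩, by
        refine hbad.le.trans (le_of_eq ?_)
        ring⟩
    have hm := hmem s ⟨hs.1.le, hs.2⟩
    have hm2 : l < l + s * (r - l) := by nlinarith [hs.1]
    have e : (l + s * (r - l) - l) / (r - l) = s := by field_simp; ring
    have := hδs s hs1
    refine ⟨l + s * (r - l), hm2, hm.2, by rw [e]; linarith, by rw [e]; linarith [hs.2], ?_⟩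
    refine seg_strip _ _ _ _ _ (hcs _ _ le_rfl hm2 hm.2.le) (hcs _ _ hm.1 hm.2 le_rfl) ?_
    intro t _
    have := hs2 (1 - t)
    refine le_trans (le_of_eq ?_) this
    ring
end

section
/- Let I ⊆ ℝ be a bounded nondegenerate interval and let φ : I → ℝ be measurable with φ and φ² integrable on I. For real numbers c < d let φ_{c,d} denote the truncation of φ: φ_{c,d}(t) = d if φ(t) > d, φ_{c,d}(t) = φ(t) if c ≤ φ(t) ≤ d, and φ_{c,d}(t) = c if φ(t) < c. Then for every subinterval J ⊆ I one has ⟨φ_{c,d}²⟩_J − (⟨φ_{c,d}⟩_J)² ≤ ⟨φ²⟩_J − (⟨φ⟩_J)². In particular, if φ ∈ BMO_ε(I) for some ε > 0, then φ_{c,d} ∈ BMO_ε(I). -/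
open MeasureTheory Set Real

lemma key_id (f : ℝ → ℝ) (a b k : ℝ) (hab : a < b)
    (h1 : IntervalIntegrable f volume a b)
    (h2 : IntervalIntegrable (fun t => (f t) ^ 2) volume a b) :
    IntervalIntegrable (fun t => (f t - k) ^ 2) volume a b ∧
    intAvg (fun t => (f t - k) ^ 2) a b =
      intAvg (fun t => (f t) ^ 2) a b - 2 * k * intAvg f a b + k ^ 2 := by
  have e : (fun t => (f t - k) ^ 2) = fun t => (f t) ^ 2 - (2 * k) * f t + k ^ 2 := by
    funext t; ring
  have h3 : IntervalIntegrable (fun t => (2 * k) * f t) volume a b := h1.const_mul _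
  have h4 : IntervalIntegrable (fun _ : ℝ => k ^ 2) volume a b := intervalIntegrable_const
  have h5 : IntervalIntegrable (fun t => (f t) ^ 2 - (2 * k) * f t) volume a b := h2.sub h3
  rw [e]
  refine ⟨h5.add h4, ?_⟩
  unfold intAvg
  rw [intervalIntegral.integral_add h5 h4, intervalIntegral.integral_sub h2 h3,
    intervalIntegral.integral_const_mul, intervalIntegral.integral_const]
  have : b - a ≠ 0 := (sub_pos.2 hab).ne'
  simp only [smul_eq_mul]
  field_simp

lemma trunc_sq (c d x y : ℝ) :
    (max c (min d x) - max c (min d y)) ^ 2 ≤ (x - y) ^ 2 := by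
  apply sq_le_sq.2
  have h1 := abs_max_sub_max_le_abs (min d x) (min d y) c
  have h2 := abs_min_sub_min_le_max d x d y
  rw [max_comm c, max_comm c]
  simp at h2
  exact h1.trans h2

theorem stmt2 (l r : ℝ) (hlr : l < r) (φ : ℝ → ℝ)
    (hmeas : Measurable φ)
    (h1 : IntegrableOn φ (Ioo l r))
    (h2 : IntegrableOn (fun t => (φ t) ^ 2) (Ioo l r))
    (c d : ℝ) (hcd : c < d) :
    (∀ a b : ℝ, l ≤ a → a < b → b ≤ r →
        intAvg (fun t => (max c (min d (φ t))) ^ 2) a b -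
            (intAvg (fun t => max c (min d (φ t))) a b) ^ 2 ≤
          intAvg (fun t => (φ t) ^ 2) a b - (intAvg φ a b) ^ 2) ∧
    (∀ ε : ℝ, 0 < ε → memBMOe ε l r φ →
        memBMOe ε l r (fun t => max c (min d (φ t)))) := by
  have hm : Measurable (fun t => max c (min d (φ t))) :=
    measurable_const.max (measurable_const.min hmeas)
  have hb : ∀ t, |max c (min d (φ t))| ≤ |c| + |d| := by
    intro t
    have h3 : max c (min d (φ t)) ≤ d := max_le hcd.le (min_le_left _ _)
    have h4 : c ≤ max c (min d (φ t)) := le_max_left _ _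
    rw [abs_le]
    constructor
    · linarith [neg_abs_le c, abs_nonneg d]
    · linarith [le_abs_self d, abs_nonneg c]
  have g1 : IntegrableOn (fun t => max c (min d (φ t))) (Ioo l r) :=
    Measure.integrableOn_of_bounded (M := |c| + |d|) (by simp) hm.aestronglyMeasurable
      (Filter.Eventually.of_forall hb)
  have g2 : IntegrableOn (fun t => (max c (min d (φ t))) ^ 2) (Ioo l r) :=
    Measure.integrableOn_of_bounded (M := (|c| + |d|) ^ 2) (by simp)
      (hm.pow_const 2).aestronglyMeasurable
      (Filter.Eventually.of_forall fun t => by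
        rw [Real.norm_eq_abs, abs_pow]
        exact pow_le_pow_left₀ (abs_nonneg _) (hb t) 2)
  have main : ∀ a b : ℝ, l ≤ a → a < b → b ≤ r →
        intAvg (fun t => (max c (min d (φ t))) ^ 2) a b -
            (intAvg (fun t => max c (min d (φ t))) a b) ^ 2 ≤
          intAvg (fun t => (φ t) ^ 2) a b - (intAvg φ a b) ^ 2 := by
    intro a b ha hab hbr
    have tr : ∀ f : ℝ → ℝ, IntegrableOn f (Ioo l r) → IntervalIntegrable f volume a b := by
      intro f hf
      rw [intervalIntegrable_iff_integrableOn_Ioo_of_le hab.le]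
      exact hf.mono_set (Ioo_subset_Ioo ha hbr)
    set m := intAvg φ a b with hmdef
    obtain ⟨i1, e1⟩ := key_id φ a b m hab (tr _ h1) (tr _ h2)
    obtain ⟨i2, e2⟩ := key_id _ a b (max c (min d m)) hab (tr _ g1) (tr _ g2)
    have hle : intAvg (fun t => (max c (min d (φ t)) - max c (min d m)) ^ 2) a b ≤
        intAvg (fun t => (φ t - m) ^ 2) a b := by
      unfold intAvg
      apply div_le_div_of_nonneg_right _ (sub_pos.2 hab).le
      exact intervalIntegral.integral_mono hab.le i2 i1 (fun t => trunc_sq c d (φ t) m)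
    rw [e1, e2, ← hmdef] at hle
    nlinarith [sq_nonneg (intAvg (fun t => max c (min d (φ t))) a b - max c (min d m))]
  refine ⟨main, fun ε _ h => ⟨g1, g2, fun a b ha hab hbr => ?_⟩⟩
  exact (main a b ha hab hbr).trans (h.2.2 a b ha hab hbr)
end

section
/- Let ε₀ > 0 and let f ∈ 𝔚_{ε₀}. Then for r = 0, 1, 2 one has f^{(r)}(u)·e^{−|u|/ε₀} → 0 as u → +∞ and also as u → −∞. -/
open MeasureTheory Set Real

/-- The class `𝔚_{ε₀}`: `f` is twice continuously differentiable, `f''` is locally absolutely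
continuous with a.e. derivative `f3` (= `f'''`), and `f⁽ʳ⁾(t)·e^{−|t|/ε₀}` is integrable for
`r = 0, 1, 2, 3`. -/
def memWcl (ε₀ : ℝ) (f f3 : ℝ → ℝ) : Prop :=
  ContDiff ℝ 2 f ∧
  (∀ x y : ℝ, x ≤ y → deriv (deriv f) y - deriv (deriv f) x = ∫ t in x..y, f3 t) ∧
  Integrable (fun t => f t * Real.exp (-|t| / ε₀)) ∧
  Integrable (fun t => deriv f t * Real.exp (-|t| / ε₀)) ∧
  Integrable (fun t => deriv (deriv f) t * Real.exp (-|t| / ε₀)) ∧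
  Integrable (fun t => f3 t * Real.exp (-|t| / ε₀))

theorem aux_window (k : ℝ → ℝ) (hk : Integrable k) :
    Filter.Tendsto (fun u => ∫ t in u..(u+1), k t) Filter.atTop (nhds 0) ∧
    Filter.Tendsto (fun u => ∫ t in u..(u+1), k t) Filter.atBot (nhds 0) := by
  have hii : ∀ a b : ℝ, IntervalIntegrable k volume a b := fun a b => hk.intervalIntegrable
  constructor
  · have h1 := intervalIntegral_tendsto_integral_Ioi (0:ℝ) hk.integrableOn
      (Filter.tendsto_id (α := ℝ) (x := Filter.atTop))
    have h2 := intervalIntegral_tendsto_integral_Ioi (0:ℝ) hk.integrableOn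
      (Filter.tendsto_atTop_add_const_right Filter.atTop (1:ℝ) Filter.tendsto_id)
    have h3 := h2.sub h1
    rw [sub_self] at h3
    refine h3.congr fun u => ?_
    exact intervalIntegral.integral_interval_sub_left (hii _ _) (hii _ _)
  · have h1 := intervalIntegral_tendsto_integral_Iic (0:ℝ) hk.integrableOn
      (Filter.tendsto_id (α := ℝ) (x := Filter.atBot))
    have h2 := intervalIntegral_tendsto_integral_Iic (0:ℝ) hk.integrableOn
      (Filter.tendsto_atBot_add_const_right Filter.atBot (1:ℝ) Filter.tendsto_id)
    have h3 := h1.sub h2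
    rw [sub_self] at h3
    refine h3.congr fun u => ?_
    have := intervalIntegral.integral_add_adjacent_intervals (hii u (u+1)) (hii (u+1) 0)
    simp only [id] at *
    linarith

theorem aux_main (ε : ℝ) (hε : 0 < ε) (g h : ℝ → ℝ)
    (hgh : ∀ x y : ℝ, x ≤ y → g y - g x = ∫ t in x..y, h t)
    (hg : Integrable (fun t => g t * Real.exp (-|t| / ε)))
    (hh : Integrable (fun t => h t * Real.exp (-|t| / ε))) :
    Filter.Tendsto (fun u => g u * Real.exp (-|u| / ε)) Filter.atTop (nhds 0) ∧
    Filter.Tendsto (fun u => g u * Real.exp (-|u| / ε)) Filter.atBot (nhds 0) := by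
  set C := Real.exp (1 / ε) with hC
  have hw : ∀ u t : ℝ, u ≤ t → t ≤ u + 1 →
      Real.exp (-|u| / ε) ≤ C * Real.exp (-|t| / ε) := by
    intro u t h1 h2
    rw [hC, ← Real.exp_add, ← add_div]
    apply Real.exp_le_exp.2
    apply div_le_div_of_nonneg_right _ hε.le
    have := abs_sub_abs_le_abs_sub t u
    rw [abs_of_nonneg (sub_nonneg.2 h1)] at this
    linarith
  have hG := (hg.norm.const_mul C)
  have hH := (hh.norm.const_mul C)
  have key : ∀ u, ‖g u * Real.exp (-|u| / ε)‖ ≤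
      (∫ t in u..(u+1), C * ‖g t * Real.exp (-|t| / ε)‖) +
      ∫ t in u..(u+1), C * ‖h t * Real.exp (-|t| / ε)‖ := by
    intro u
    set J := ∫ t in u..(u+1), C * ‖h t * Real.exp (-|t| / ε)‖ with hJ
    have pt : ∀ t ∈ Icc u (u+1), ‖g u * Real.exp (-|u| / ε)‖ ≤
        C * ‖g t * Real.exp (-|t| / ε)‖ + J := by
      rintro t ⟨h1, h2⟩
      have e1 : g u * Real.exp (-|u| / ε) = g t * Real.exp (-|u| / ε) -
          ∫ s in u..t, h s * Real.exp (-|u| / ε) := by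
        rw [intervalIntegral.integral_mul_const, ← hgh u t h1]; ring
      have pw : ∀ (q : ℝ → ℝ) s, u ≤ s → s ≤ u + 1 →
          ‖q s * Real.exp (-|u| / ε)‖ ≤ C * ‖q s * Real.exp (-|s| / ε)‖ := by
        intro q s a b
        rw [norm_mul, norm_mul, Real.norm_of_nonneg (Real.exp_pos _).le,
          Real.norm_of_nonneg (Real.exp_pos _).le]
        have := mul_le_mul_of_nonneg_left (hw u s a b) (norm_nonneg (q s))
        linarith
      have e2 : ‖∫ s in u..t, h s * Real.exp (-|u| / ε)‖ ≤
          ∫ s in u..t, C * ‖h s * Real.exp (-|s| / ε)‖ := by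
        apply intervalIntegral.norm_integral_le_of_norm_le h1
        · exact Filter.Eventually.of_forall fun s hs => pw h s hs.1.le (hs.2.trans h2)
        · exact hH.intervalIntegrable
      have e3 : (∫ s in u..t, C * ‖h s * Real.exp (-|s| / ε)‖) ≤ J := by
        apply intervalIntegral.integral_mono_interval le_rfl h1 h2
        · exact Filter.Eventually.of_forall fun s => by positivity
        · exact hH.intervalIntegrable
      rw [e1]
      have := norm_sub_le (g t * Real.exp (-|u| / ε)) (∫ s in u..t, h s * Real.exp (-|u| / ε))
      have := pw g t h1 h2
      linarith
    have := intervalIntegral.integral_mono_on (μ := volume) (by linarith : u ≤ u + 1)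
      (intervalIntegrable_const (c := ‖g u * Real.exp (-|u| / ε)‖))
      ((hG.intervalIntegrable).add (intervalIntegrable_const (c := J))) pt
    rw [intervalIntegral.integral_add hG.intervalIntegrable intervalIntegrable_const] at this
    simpa using this
  obtain ⟨a1, a2⟩ := aux_window _ hG
  obtain ⟨b1, b2⟩ := aux_window _ hH
  have c1 := a1.add b1
  have c2 := a2.add b2
  rw [add_zero] at c1 c2
  exact ⟨squeeze_zero_norm key c1, squeeze_zero_norm key c2⟩

theorem stmt3 (ε₀ : ℝ) (hε₀ : 0 < ε₀) (f f3 : ℝ → ℝ) (hf : memWcl ε₀ f f3) :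
    Filter.Tendsto (fun u => f u * Real.exp (-|u| / ε₀)) Filter.atTop (nhds 0) ∧
    Filter.Tendsto (fun u => f u * Real.exp (-|u| / ε₀)) Filter.atBot (nhds 0) ∧
    Filter.Tendsto (fun u => deriv f u * Real.exp (-|u| / ε₀)) Filter.atTop (nhds 0) ∧
    Filter.Tendsto (fun u => deriv f u * Real.exp (-|u| / ε₀)) Filter.atBot (nhds 0) ∧
    Filter.Tendsto (fun u => deriv (deriv f) u * Real.exp (-|u| / ε₀)) Filter.atTop (nhds 0) ∧
    Filter.Tendsto (fun u => deriv (deriv f) u * Real.exp (-|u| / ε₀)) Filter.atBot (nhds 0) := by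
  obtain ⟨hc, h3, i0, i1, i2, i3⟩ := hf
  have hd1 : ContDiff ℝ 1 (deriv f) := by
    have : ContDiff ℝ (1 + 1) f := by simpa [one_add_one_eq_two] using hc
    exact (contDiff_succ_iff_deriv.1 this).2.2
  have ftc : ∀ q : ℝ → ℝ, ContDiff ℝ 1 q → ∀ x y : ℝ, x ≤ y →
      q y - q x = ∫ t in x..y, deriv q t := by
    intro q hq x y _
    rw [intervalIntegral.integral_deriv_eq_sub]
    · exact fun t _ => (hq.differentiable one_ne_zero) t
    · exact (hq.continuous_deriv le_rfl).intervalIntegrable _ _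
  obtain ⟨a, b⟩ := aux_main ε₀ hε₀ f _ (ftc f (hc.of_le (by norm_num))) i0 i1
  obtain ⟨c, d⟩ := aux_main ε₀ hε₀ _ _ (ftc _ hd1) i1 i2
  obtain ⟨e, g⟩ := aux_main ε₀ hε₀ _ _ h3 i2 i3
  exact ⟨a, b, c, d, e, g⟩
end

section
/- Suppose 0 < ε < ε₀, f ∈ 𝔚_{ε₀}, and G : Ω_ε → ℝ is continuous, locally concave on Ω_ε, and satisfies the boundary condition G(u, u²) = f(u) for all u ∈ ℝ. Then for every bounded nondegenerate interval I and every φ ∈ BMO_ε(I), the function f∘φ is integrable on I and ⟨f∘φ⟩_I ≤ G(⟨φ⟩_I, ⟨φ²⟩_I). In particular, B_ε(x; f) ≤ G(x) for every x ∈ Ω_ε. -/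
open MeasureTheory Set Real

/-- Local concavity on a subset of the plane. -/
def LocallyConcaveOn (Ω : Set (ℝ × ℝ)) (G : ℝ × ℝ → ℝ) : Prop :=
  ∀ x y : ℝ × ℝ, x ∈ Ω → y ∈ Ω → segment ℝ x y ⊆ Ω →
    ∀ α β : ℝ, 0 ≤ α → 0 ≤ β → α + β = 1 →
      α * G x + β * G y ≤ G (α • x + β • y)

lemma seg_of_w {ε : ℝ} {x y : ℝ × ℝ} (hx : x ∈ parabStrip ε) (hy : y ∈ parabStrip ε) {A C : ℝ}
    (hA : A ^ 2 = ε ^ 2 - (x.2 - x.1 ^ 2)) (hC : C ^ 2 = ε ^ 2 - (y.2 - y.1 ^ 2))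
    (h : (x.1 - y.1) ^ 2 ≤ (A + C) ^ 2) : segment ℝ x y ⊆ parabStrip ε := by
  rintro z ⟨α, β, hα, hβ, hab, rfl⟩
  obtain ⟨hx1, hx2⟩ := hx
  obtain ⟨hy1, hy2⟩ := hy
  simp only [parabStrip, mem_ofPred_eq, Prod.fst_add, Prod.smul_fst, Prod.snd_add, Prod.smul_snd,
    smul_eq_mul]
  have hb : β = 1 - α := by linarith
  have hp : 0 ≤ α * β := mul_nonneg hα hβ
  have h1 := mul_le_mul_of_nonneg_left h hp
  constructor
  · have h2 := mul_le_mul_of_nonneg_left hx1 hα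
    have h3 := mul_le_mul_of_nonneg_left hy1 hβ
    have h4 := mul_nonneg hp (sq_nonneg (x.1 - y.1))
    have : (α * x.1 + β * y.1) ^ 2 = α * x.1 ^ 2 + β * y.1 ^ 2 - α * β * (x.1 - y.1) ^ 2 := by
      subst hb; ring
    linarith
  · have e1 : (α * x.1 + β * y.1) ^ 2 = α * x.1 ^ 2 + β * y.1 ^ 2 - α * β * (x.1 - y.1) ^ 2 := by
      subst hb; ring
    have e2 : α * A ^ 2 + β * C ^ 2 - α * β * (A + C) ^ 2 = (α * A - β * C) ^ 2 := by
      subst hb; ring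
    have e3 := sq_nonneg (α * A - β * C)
    have e4 : α * x.2 + β * y.2 = α * x.1 ^ 2 + β * y.1 ^ 2 + ε ^ 2 - α * A ^ 2 - β * C ^ 2 := by
      rw [hA, hC]; subst hb; ring
    linarith

lemma w_of_seg {ε : ℝ} {x y : ℝ × ℝ} {A C : ℝ} (hA0 : 0 ≤ A) (hC0 : 0 ≤ C)
    (hA : A ^ 2 = ε ^ 2 - (x.2 - x.1 ^ 2)) (hC : C ^ 2 = ε ^ 2 - (y.2 - y.1 ^ 2))
    (h : segment ℝ x y ⊆ parabStrip ε) : (x.1 - y.1) ^ 2 ≤ (A + C) ^ 2 := by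
  have key : ∀ α : ℝ, 0 ≤ α → α ≤ 1 →
      α * (1 - α) * (x.1 - y.1) ^ 2 ≤ α * A ^ 2 + (1 - α) * C ^ 2 := by
    intro α h0 h1
    have hz := (h ⟨α, 1 - α, h0, by linarith, by ring, rfl⟩).2
    simp only [Prod.fst_add, Prod.smul_fst, Prod.snd_add, Prod.smul_snd, smul_eq_mul] at hz
    rw [hA, hC]
    nlinarith
  rcases eq_or_lt_of_le hA0 with hA' | hA'
  · by_contra! hlt
    subst hA'
    have hD : 0 < (x.1 - y.1) ^ 2 := lt_of_le_of_lt (sq_nonneg _) hlt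
    set D := (x.1 - y.1) ^ 2
    have hq : C ^ 2 / D < 1 := by rw [div_lt_one hD]; linarith
    have hq0 : 0 ≤ C ^ 2 / D := by positivity
    have := key ((1 + C ^ 2 / D) / 2) (by linarith) (by linarith)
    have e : C ^ 2 = (C ^ 2 / D) * D := by field_simp
    set q := C ^ 2 / D
    rw [e] at this
    have h5 : 0 < (1 - (1 + q) / 2) * D * ((1 + q) / 2 - q) := by
      apply mul_pos (mul_pos _ hD) <;> linarith
    nlinarith
  · have hs : 0 < A + C := by linarith
    rcases eq_or_lt_of_le hC0 with hC' | hC'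
    · by_contra! hlt
      subst hC'
      have hD : 0 < (x.1 - y.1) ^ 2 := lt_of_le_of_lt (sq_nonneg _) hlt
      set D := (x.1 - y.1) ^ 2
      have hq : A ^ 2 / D < 1 := by rw [div_lt_one hD]; linarith
      have hq0 : 0 ≤ A ^ 2 / D := by positivity
      have := key (1 - (1 + A ^ 2 / D) / 2) (by linarith) (by linarith)
      have e : A ^ 2 = (A ^ 2 / D) * D := by field_simp
      set q := A ^ 2 / D
      rw [e] at this
      have h5 : 0 < (1 - (1 + q) / 2) * D * ((1 + q) / 2 - q) := by
        apply mul_pos (mul_pos _ hD) <;> linarith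
      nlinarith
    · have := key (C / (A + C)) (by positivity) (by rw [div_le_one hs]; linarith)
      have e : 1 - C / (A + C) = A / (A + C) := by field_simp; ring
      rw [e] at this
      have h2 : C / (A + C) * (A / (A + C)) * (x.1 - y.1) ^ 2
        = (A * C) / (A + C) ^ 2 * (x.1 - y.1) ^ 2 := by field_simp
      have h3 : C / (A + C) * A ^ 2 + A / (A + C) * C ^ 2
        = (A * C) / (A + C) ^ 2 * (A + C) ^ 2 := by field_simp
      rw [h2, h3] at this
      exact le_of_mul_le_mul_left this (by positivity)

lemma exp_aux1 {d : ℝ} (hd : 0 ≤ d) : 1 ≤ Real.exp d * (1 - d + d ^ 2 / 2) := by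
  have hder : ∀ x : ℝ, HasDerivAt (fun d : ℝ => Real.exp d * (1 - d + d ^ 2 / 2))
      (Real.exp x * x ^ 2 / 2) x := by
    intro x
    have h := (Real.hasDerivAt_exp x).mul
      (((hasDerivAt_const x (1 : ℝ)).sub (hasDerivAt_id x)).add (((hasDerivAt_id x).pow 2).div_const 2))
    refine h.congr_deriv ?_
    simp; ring
  have hm : Monotone (fun d : ℝ => Real.exp d * (1 - d + d ^ 2 / 2)) :=
    monotone_of_deriv_nonneg (fun x => (hder x).differentiableAt)
      (fun x => by rw [(hder x).deriv]; positivity)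
  simpa using hm hd

lemma exp_aux2 {s : ℝ} (hs : 0 ≤ s) : (1 - s) * Real.exp (2 * s) ≤ 1 + s := by
  have hder : ∀ x : ℝ, HasDerivAt (fun s : ℝ => (1 + s) * Real.exp (-s) - (1 - s) * Real.exp s)
      (x * (Real.exp x - Real.exp (-x))) x := by
    intro x
    have h := (((hasDerivAt_const x (1 : ℝ)).add (hasDerivAt_id x)).mul (hasDerivAt_neg x).exp).sub
      (((hasDerivAt_const x (1 : ℝ)).sub (hasDerivAt_id x)).mul (Real.hasDerivAt_exp x))
    refine h.congr_deriv ?_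
    simp; ring
  have hm : MonotoneOn (fun s : ℝ => (1 + s) * Real.exp (-s) - (1 - s) * Real.exp s) (Ici 0) := by
    apply monotoneOn_of_deriv_nonneg (convex_Ici 0)
    · exact fun x _ => (hder x).continuousAt.continuousWithinAt
    · exact fun x _ => (hder x).differentiableAt.differentiableWithinAt
    · intro x hx
      rw [interior_Ici] at hx
      rw [(hder x).deriv]
      have : Real.exp (-x) ≤ Real.exp x := Real.exp_le_exp.2 (by linarith [mem_Ioi.1 hx])
      exact mul_nonneg (le_of_lt hx) (by linarith)
  have h := hm (mem_Ici.2 le_rfl) (mem_Ici.2 hs) hs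
  simp only [neg_zero, Real.exp_zero] at h
  have e1 : Real.exp (2 * s) = Real.exp s * Real.exp s := by rw [← Real.exp_add]; ring_nf
  have e2 : Real.exp (-s) * Real.exp s = 1 := by rw [← Real.exp_add]; simp
  have h' : (1 - s) * Real.exp s ≤ (1 + s) * Real.exp (-s) := by linarith
  have := mul_le_mul_of_nonneg_right h' (Real.exp_pos s).le
  rw [e1]
  calc (1 - s) * (Real.exp s * Real.exp s) = (1 - s) * Real.exp s * Real.exp s := by ring
    _ ≤ (1 + s) * Real.exp (-s) * Real.exp s := this
    _ = 1 + s := by rw [mul_assoc, e2, mul_one]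

lemma exp_aux3 {w d : ℝ} (hw : 0 ≤ w) (hd : -(2 * w) ≤ d) :
    1 - w ≤ Real.exp d * (1 - w - d * (1 - w) + d ^ 2 / 2) := by
  have h1 : Real.exp d * (1 - d) ≤ 1 := by
    have := Real.add_one_le_exp (-d)
    have h2 := mul_le_mul_of_nonneg_left this (Real.exp_pos d).le
    rw [← Real.exp_add] at h2
    simp at h2
    linarith
  rcases le_total 0 d with h | h
  · have := exp_aux1 h
    nlinarith
  · have := exp_aux2 (s := -d / 2) (by linarith)
    have e : Real.exp (2 * (-d / 2)) = Real.exp (-d) := by ring_nf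
    rw [e] at this
    have h2 := mul_le_mul_of_nonneg_right this (Real.exp_pos d).le
    have e2 : Real.exp (-d) * Real.exp d = 1 := by rw [← Real.exp_add]; simp
    rw [mul_assoc, e2] at h2
    nlinarith [mul_nonneg (by linarith : 0 ≤ w + d / 2) (by linarith : 0 ≤ 1 - Real.exp d * (1 - d))]

noncomputable def wfun (ε : ℝ) (x : ℝ × ℝ) : ℝ := √(ε ^ 2 - (x.2 - x.1 ^ 2))

noncomputable def Gexp (ε : ℝ) (x : ℝ × ℝ) : ℝ := (1 - wfun ε x) * Real.exp (x.1 + wfun ε x)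

lemma wfun_sq {ε : ℝ} {x : ℝ × ℝ} (hx : x ∈ parabStrip ε) :
    wfun ε x ^ 2 = ε ^ 2 - (x.2 - x.1 ^ 2) := Real.sq_sqrt (by linarith [hx.2])

lemma wfun_nonneg {ε : ℝ} {x : ℝ × ℝ} : 0 ≤ wfun ε x := Real.sqrt_nonneg _

lemma Gexp_cont (ε : ℝ) : Continuous (Gexp ε) := by
  unfold Gexp wfun; fun_prop

lemma Gexp_le {ε : ℝ} {x z : ℝ × ℝ} (hx : x ∈ parabStrip ε) (hz : z ∈ parabStrip ε)
    (h : segment ℝ x z ⊆ parabStrip ε) :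
    Gexp ε x ≤ Real.exp (z.1 + wfun ε z) * ((1 - (z.1 + wfun ε z)) * (x.1 + 1) + x.2 / 2
      + (z.1 + wfun ε z) ^ 2 / 2 - ε ^ 2 / 2) := by
  have h1 := w_of_seg wfun_nonneg wfun_nonneg (wfun_sq hx) (wfun_sq hz) h
  have h2 : x.1 - wfun ε x ≤ z.1 + wfun ε z := by
    linarith [(abs_le_of_sq_le_sq' h1 (add_nonneg wfun_nonneg wfun_nonneg)).2]
  have hw := wfun_sq hx
  unfold Gexp
  have hw0 := wfun_nonneg (ε := ε) (x := x)
  generalize wfun ε x = w at *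
  generalize z.1 + wfun ε z = u at *
  have h3 := exp_aux3 (w := w) (d := u - x.1 - w) hw0 (by linarith)
  have h4 := mul_le_mul_of_nonneg_right h3 (Real.exp_pos (x.1 + w)).le
  refine h4.trans (le_of_eq ?_)
  have e : Real.exp u = Real.exp (u - x.1 - w) * Real.exp (x.1 + w) := by
    rw [← Real.exp_add]; ring_nf
  have hx2 : x.2 = ε ^ 2 + x.1 ^ 2 - w ^ 2 := by linarith
  rw [e, hx2]; ring

lemma Gexp_eq {ε : ℝ} {z : ℝ × ℝ} (hz : z ∈ parabStrip ε) :
    Gexp ε z = Real.exp (z.1 + wfun ε z) * ((1 - (z.1 + wfun ε z)) * (z.1 + 1) + z.2 / 2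
      + (z.1 + wfun ε z) ^ 2 / 2 - ε ^ 2 / 2) := by
  have hw := wfun_sq hz
  have hx2 : z.2 = ε ^ 2 + z.1 ^ 2 - wfun ε z ^ 2 := by linarith
  unfold Gexp
  rw [hx2]; ring

lemma Gexp_conc (ε : ℝ) : LocallyConcaveOn (parabStrip ε) (Gexp ε) := by
  intro x y hx hy hs α β hα hβ hab
  have hz : α • x + β • y ∈ segment ℝ x y := ⟨α, β, hα, hβ, hab, rfl⟩
  have hxz := ((convex_segment x y).segment_subset (left_mem_segment ℝ x y) hz).trans hs
  have hyz : segment ℝ y (α • x + β • y) ⊆ parabStrip ε := 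
    ((convex_segment x y).segment_subset (right_mem_segment ℝ x y) hz).trans hs
  have h1 := mul_le_mul_of_nonneg_left (Gexp_le hx (hs hz) hxz) hα
  have h2 := mul_le_mul_of_nonneg_left (Gexp_le hy (hs hz) hyz) hβ
  rw [Gexp_eq (hs hz)]
  refine (add_le_add h1 h2).trans (le_of_eq ?_)
  generalize (α • x + β • y).1 + wfun ε (α • x + β • y) = u
  simp only [Prod.fst_add, Prod.smul_fst, Prod.snd_add, Prod.smul_snd, smul_eq_mul]
  obtain rfl : β = 1 - α := by linarith
  ring

noncomputable def XX (ψ : ℝ → ℝ) (a b : ℝ) : ℝ × ℝ := (intAvg ψ a b, intAvg (fun t => ψ t ^ 2) a b)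

lemma ii_of {g : ℝ → ℝ} {l r a b : ℝ} (h : IntegrableOn g (Ioo l r)) (hla : l ≤ a) (hab : a ≤ b)
    (hbr : b ≤ r) : IntervalIntegrable g volume a b := by
  rw [intervalIntegrable_iff_integrableOn_Ioo_of_le hab]
  exact h.mono_set (Ioo_subset_Ioo hla hbr)

lemma sq_avg_dev {ψ : ℝ → ℝ} {a b : ℝ} (hab : a < b) (h1 : IntervalIntegrable ψ volume a b)
    (h2 : IntervalIntegrable (fun t => ψ t ^ 2) volume a b) (m : ℝ) :
    intAvg (fun t => (ψ t - m) ^ 2) a b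
      = intAvg (fun t => ψ t ^ 2) a b - 2 * m * intAvg ψ a b + m ^ 2 := by
  have hb : b - a ≠ 0 := by linarith
  have e : (∫ t in a..b, (ψ t - m) ^ 2)
      = (∫ t in a..b, ψ t ^ 2) - 2 * m * (∫ t in a..b, ψ t) + (b - a) * m ^ 2 := by
    have : (fun t => (ψ t - m) ^ 2) = fun t => (ψ t ^ 2 - 2 * m * ψ t) + m ^ 2 := by
      ext t; ring
    rw [this, intervalIntegral.integral_add (h2.sub (h1.const_mul _)) (by simp),
      intervalIntegral.integral_sub h2 (h1.const_mul _), intervalIntegral.integral_const_mul]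
    simp
  unfold intAvg
  rw [e]
  field_simp

lemma avg_nonneg {g : ℝ → ℝ} {a b : ℝ} (hab : a < b) (h : ∀ t, 0 ≤ g t) : 0 ≤ intAvg g a b :=
  div_nonneg (intervalIntegral.integral_nonneg hab.le (fun t _ => h t)) (by linarith)

lemma sq_avg_le {ψ : ℝ → ℝ} {a b : ℝ} (hab : a < b) (h1 : IntervalIntegrable ψ volume a b)
    (h2 : IntervalIntegrable (fun t => ψ t ^ 2) volume a b) :
    (intAvg ψ a b) ^ 2 ≤ intAvg (fun t => ψ t ^ 2) a b := by
  have h := sq_avg_dev hab h1 h2 (intAvg ψ a b)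
  have := avg_nonneg hab (g := fun t => (ψ t - intAvg ψ a b) ^ 2) (fun t => sq_nonneg _)
  rw [h] at this
  nlinarith

lemma XX_mem {ε l r : ℝ} {ψ : ℝ → ℝ} (h : memBMOe ε l r ψ) {a b : ℝ} (hla : l ≤ a) (hab : a < b)
    (hbr : b ≤ r) : XX ψ a b ∈ parabStrip ε := by
  refine ⟨sq_avg_le hab (ii_of h.1 hla hab.le hbr) (ii_of h.2.1 hla hab.le hbr), ?_⟩
  have := h.2.2 a b hla hab hbr
  simp only [XX]; linarith

lemma split_lem {ε' ε l r : ℝ} {ψ : ℝ → ℝ} (h0 : 0 ≤ ε') (hlt : ε' < ε) (h : memBMOe ε' l r ψ) :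
    ∃ θ : ℝ, 0 ≤ θ ∧ θ < 1 ∧ ∀ a b : ℝ, l ≤ a → a < b → b ≤ r → ∃ c, a < c ∧ c < b ∧
      c - a ≤ θ * (b - a) ∧ b - c ≤ θ * (b - a) ∧
      segment ℝ (XX ψ a c) (XX ψ c b) ⊆ parabStrip ε ∧
      XX ψ a b = ((c - a) / (b - a)) • XX ψ a c + ((b - c) / (b - a)) • XX ψ c b := by
  have hε : 0 < ε := by linarith
  have hκ2 : 0 < ε ^ 2 - ε' ^ 2 := by nlinarith
  set κ := √(ε ^ 2 - ε' ^ 2) with hκ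
  have hκ0 : 0 < κ := Real.sqrt_pos.2 hκ2
  have hκε : κ ≤ ε := by
    rw [hκ, Real.sqrt_le_left hε.le]; nlinarith
  refine ⟨1 - κ / (2 * ε), ?_, ?_, ?_⟩
  · have : κ / (2 * ε) ≤ 1 := by rw [div_le_one (by positivity)]; linarith
    linarith
  · have : 0 < κ / (2 * ε) := by positivity
    linarith
  intro a b hla hab hbr
  have hψ1 : IntervalIntegrable ψ volume a b := ii_of h.1 hla hab.le hbr
  have hψ2 : IntervalIntegrable (fun t => ψ t ^ 2) volume a b := ii_of h.2.1 hla hab.le hbr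
  -- value facts
  have fact : ∀ c d : ℝ, l ≤ c → c < d → d ≤ r →
      √((d - c) ^ 2 * ε ^ 2 - (d - c) * (∫ t in c..d, ψ t ^ 2) + (∫ t in c..d, ψ t) ^ 2)
        = (d - c) * √(ε ^ 2 - ((XX ψ c d).2 - (XX ψ c d).1 ^ 2)) ∧
      κ ≤ √(ε ^ 2 - ((XX ψ c d).2 - (XX ψ c d).1 ^ 2)) ∧
      √(ε ^ 2 - ((XX ψ c d).2 - (XX ψ c d).1 ^ 2)) ≤ ε ∧
      √(ε ^ 2 - ((XX ψ c d).2 - (XX ψ c d).1 ^ 2)) ^ 2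
        = ε ^ 2 - ((XX ψ c d).2 - (XX ψ c d).1 ^ 2) := by
    intro c d h1 h2 h3
    obtain ⟨hm1, hm2⟩ := XX_mem h h1 h2 h3
    have hd : 0 < d - c := by linarith
    refine ⟨?_, Real.sqrt_le_sqrt (by linarith), ?_, Real.sq_sqrt (by linarith)⟩
    · have : (d - c) ^ 2 * ε ^ 2 - (d - c) * (∫ t in c..d, ψ t ^ 2) + (∫ t in c..d, ψ t) ^ 2
          = (d - c) ^ 2 * (ε ^ 2 - ((XX ψ c d).2 - (XX ψ c d).1 ^ 2)) := by
        simp only [XX, intAvg]; field_simp; ring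
      rw [this, Real.sqrt_mul (sq_nonneg _), Real.sqrt_sq hd.le]
    · rw [Real.sqrt_le_left hε.le]; linarith
  have cont1 : ∀ g : ℝ → ℝ, IntervalIntegrable g volume a b →
      ContinuousOn (fun c => ∫ t in a..c, g t) (Icc a b) := by
    intro g hg
    have := intervalIntegral.continuousOn_primitive_interval' hg left_mem_uIcc
    rwa [uIcc_of_le hab.le] at this
  have cont2 : ∀ g : ℝ → ℝ, IntervalIntegrable g volume a b →
      ContinuousOn (fun c => ∫ t in c..b, g t) (Icc a b) := by
    intro g hg
    have := intervalIntegral.continuousOn_primitive_interval' hg right_mem_uIcc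
    rw [uIcc_of_le hab.le] at this
    simp only [intervalIntegral.integral_symm b]
    exact this.neg
  have hab' : 0 < b - a := by linarith
  obtain ⟨c, hc, hcz⟩ : (0 : ℝ) ∈ (fun c =>
      √((c - a) ^ 2 * ε ^ 2 - (c - a) * (∫ t in a..c, ψ t ^ 2) + (∫ t in a..c, ψ t) ^ 2)
      - √((b - c) ^ 2 * ε ^ 2 - (b - c) * (∫ t in c..b, ψ t ^ 2) + (∫ t in c..b, ψ t) ^ 2)) ''
      (Icc a b) := by
    apply intermediate_value_Icc hab.le
    · have i1 := cont1 _ hψ1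
      have i2 := cont1 _ hψ2
      have i3 := cont2 _ hψ1
      have i4 := cont2 _ hψ2
      fun_prop
    · constructor
      · simp [Real.sqrt_nonneg]
      · simp [Real.sqrt_nonneg]
  have hpos : 0 < √((b - a) ^ 2 * ε ^ 2 - (b - a) * (∫ t in a..b, ψ t ^ 2) + (∫ t in a..b, ψ t) ^ 2) := by
    rw [(fact a b hla hab hbr).1]
    exact mul_pos hab' (hκ0.trans_le (fact a b hla hab hbr).2.1)
  have hca : a < c := by
    rcases eq_or_lt_of_le hc.1 with h' | h'
    · subst h'
      simp at hcz
      linarith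
    · exact h'
  have hcb : c < b := by
    rcases eq_or_lt_of_le hc.2 with h' | h'
    · subst h'
      simp at hcz
      linarith
    · exact h'
  have fL := fact a c hla hca (hcb.le.trans hbr)
  have fR := fact c b (hla.trans hca.le) hcb hbr
  have f0 := fact a b hla hab hbr
  simp only at hcz
  rw [fL.1, fR.1] at hcz
  have hXX : XX ψ a b = ((c - a) / (b - a)) • XX ψ a c + ((b - c) / (b - a)) • XX ψ c b := by
    have hA : ∀ g : ℝ → ℝ, IntervalIntegrable g volume a b →
        intAvg g a b = (c - a) / (b - a) * intAvg g a c + (b - c) / (b - a) * intAvg g c b := by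
      intro g hg
      unfold intAvg
      rw [← intervalIntegral.integral_add_adjacent_intervals (b := c)
        (hg.mono_set (by rw [uIcc_of_le hca.le, uIcc_of_le hab.le]; exact Icc_subset_Icc le_rfl hcb.le))
        (hg.mono_set (by rw [uIcc_of_le hcb.le, uIcc_of_le hab.le]; exact Icc_subset_Icc hca.le le_rfl))]
      have : c - a ≠ 0 := by linarith
      have : b - c ≠ 0 := by linarith
      field_simp
    ext
    · simpa [XX] using hA _ hψ1
    · simpa [XX] using hA _ hψ2
  obtain ⟨-, hA1, hA2, hA3⟩ := fL
  obtain ⟨-, hC1, hC2, hC3⟩ := fR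
  set A := √(ε ^ 2 - ((XX ψ a c).2 - (XX ψ a c).1 ^ 2))
  set C := √(ε ^ 2 - ((XX ψ c b).2 - (XX ψ c b).1 ^ 2))
  have hs : 0 < A + C := by linarith
  have hα : c - a = C / (A + C) * (b - a) := by field_simp; linarith
  have hβ : b - c = A / (A + C) * (b - a) := by field_simp; linarith
  have hα1 : κ / (2 * ε) ≤ C / (A + C) := by
    rw [div_le_div_iff₀ (by positivity) hs]; nlinarith
  have hβ1 : κ / (2 * ε) ≤ A / (A + C) := by
    rw [div_le_div_iff₀ (by positivity) hs]; nlinarith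
  have hsum : C / (A + C) + A / (A + C) = 1 := by field_simp; ring
  have mono : ∀ x ∈ parabStrip ε', x ∈ parabStrip ε := by
    intro x hx; exact ⟨hx.1, by linarith [hx.2]⟩
  refine ⟨c, hca, hcb, ?_, ?_, ?_, hXX⟩
  · rw [hα]; apply mul_le_mul_of_nonneg_right _ hab'.le; linarith
  · rw [hβ]; apply mul_le_mul_of_nonneg_right _ hab'.le; linarith
  · refine seg_of_w (mono _ (XX_mem h hla hca (hcb.le.trans hbr)))
      (mono _ (XX_mem h (hla.trans hca.le) hcb hbr)) hA3 hC3 ?_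
    have hm := (XX_mem h hla hab hbr).2
    have e1 : (c - a) / (b - a) = C / (A + C) := by rw [hα]; field_simp
    have e2 : (b - c) / (b - a) = A / (A + C) := by rw [hβ]; field_simp
    rw [hXX, e1, e2] at hm
    simp only [Prod.fst_add, Prod.smul_fst, Prod.snd_add, Prod.smul_snd, smul_eq_mul] at hm
    set x := XX ψ a c
    set y := XX ψ c b
    have hx2 : x.2 = ε ^ 2 + x.1 ^ 2 - A ^ 2 := by linarith
    have hy2 : y.2 = ε ^ 2 + y.1 ^ 2 - C ^ 2 := by linarith
    have id : ε ^ 2 + (C / (A + C) * x.1 + A / (A + C) * y.1) ^ 2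
        - (C / (A + C) * x.2 + A / (A + C) * y.2)
        = A * C / (A + C) ^ 2 * ((A + C) ^ 2 - (x.1 - y.1) ^ 2) := by
      rw [hx2, hy2]; field_simp; ring
    have h6 : 0 ≤ A * C / (A + C) ^ 2 * ((A + C) ^ 2 - (x.1 - y.1) ^ 2) := by
      rw [← id]; linarith
    have hAC : 0 < A * C / (A + C) ^ 2 := by
      have : 0 < A := by linarith
      have : 0 < C := by linarith
      positivity
    have := nonneg_of_mul_nonneg_right h6 hAC
    linarith

lemma tree_lem {ε' ε l r : ℝ} {ψ : ℝ → ℝ} (h0 : 0 ≤ ε') (hlt : ε' < ε) (h : memBMOe ε' l r ψ)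
    {G : ℝ × ℝ → ℝ} (hG : LocallyConcaveOn (parabStrip ε) G) :
    ∃ θ : ℝ, 0 ≤ θ ∧ θ < 1 ∧ ∀ n : ℕ, ∀ a b : ℝ, l ≤ a → a < b → b ≤ r → ∃ T : ℝ → ℝ,
      (∀ t ∈ Ioc a b, ∃ p : ℝ × ℝ, a ≤ p.1 ∧ p.1 < p.2 ∧ p.2 ≤ b ∧ p.1 ≤ t ∧ t ≤ p.2 ∧
        p.2 - p.1 ≤ θ ^ n * (b - a) ∧ T t = G (XX ψ p.1 p.2)) ∧
      IntervalIntegrable T volume a b ∧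
      ∫ t in a..b, T t ≤ (b - a) * G (XX ψ a b) := by
  obtain ⟨θ, hθ0, hθ1, hsp⟩ := split_lem h0 hlt h
  refine ⟨θ, hθ0, hθ1, ?_⟩
  intro n
  induction n with
  | zero =>
    intro a b hla hab hbr
    refine ⟨fun _ => G (XX ψ a b), ?_, by simp, by simp⟩
    intro t ht
    exact ⟨(a, b), le_rfl, hab, le_rfl, ht.1.le, ht.2, by simp, rfl⟩
  | succ n ih =>
    intro a b hla hab hbr
    obtain ⟨c, hac, hcb, hc1, hc2, hseg, hX⟩ := hsp a b hla hab hbr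
    obtain ⟨T1, h11, h12, h13⟩ := ih a c hla hac (hcb.le.trans hbr)
    obtain ⟨T2, h21, h22, h23⟩ := ih c b (hla.trans hac.le) hcb hbr
    have hθn : 0 ≤ θ ^ n := pow_nonneg hθ0 n
    have eq1 : EqOn T1 (fun t => if t ≤ c then T1 t else T2 t) (uIoc a c) := by
      intro t ht
      rw [uIoc_of_le hac.le] at ht
      simp [ht.2]
    have eq2 : EqOn T2 (fun t => if t ≤ c then T1 t else T2 t) (uIoc c b) := by
      intro t ht
      rw [uIoc_of_le hcb.le] at ht
      simp [not_le.2 ht.1]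
    have i1 := (intervalIntegrable_congr (μ := volume) eq1).1 h12
    have i2 := (intervalIntegrable_congr (μ := volume) eq2).1 h22
    refine ⟨fun t => if t ≤ c then T1 t else T2 t, ?_, i1.trans i2, ?_⟩
    · intro t ht
      by_cases htc : t ≤ c
      · obtain ⟨p, p1, p2, p3, p4, p5, p6, p7⟩ := h11 t ⟨ht.1, htc⟩
        refine ⟨p, p1, p2, p3.trans hcb.le, p4, p5, p6.trans ?_, by simp [htc, p7]⟩
        calc θ ^ n * (c - a) ≤ θ ^ n * (θ * (b - a)) := mul_le_mul_of_nonneg_left hc1 hθn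
          _ = _ := by ring
      · obtain ⟨p, p1, p2, p3, p4, p5, p6, p7⟩ := h21 t ⟨not_le.1 htc, ht.2⟩
        refine ⟨p, hac.le.trans p1, p2, p3, p4, p5, p6.trans ?_, by simp [htc, p7]⟩
        calc θ ^ n * (b - c) ≤ θ ^ n * (θ * (b - a)) := mul_le_mul_of_nonneg_left hc2 hθn
          _ = _ := by ring
    · rw [← intervalIntegral.integral_add_adjacent_intervals i1 i2,
        ← intervalIntegral.integral_congr_ae (Filter.Eventually.of_forall eq1),
        ← intervalIntegral.integral_congr_ae (Filter.Eventually.of_forall eq2)]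
      have hba : 0 < b - a := by linarith
      have hh := hG _ _ (hseg (left_mem_segment ℝ _ _)) (hseg (right_mem_segment ℝ _ _)) hseg
        ((c - a) / (b - a)) ((b - c) / (b - a)) (div_nonneg (by linarith) hba.le)
        (div_nonneg (by linarith) hba.le) (by field_simp; ring)
      rw [← hX] at hh
      have h5 := mul_le_mul_of_nonneg_left hh hba.le
      have e : (b - a) * ((c - a) / (b - a) * G (XX ψ a c) + (b - c) / (b - a) * G (XX ψ c b))
        = (c - a) * G (XX ψ a c) + (b - c) * G (XX ψ c b) := by field_simp
      linarith

open Filter Topology in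
lemma lebesgue_lem {l r : ℝ} {g : ℝ → ℝ} (hg : IntegrableOn g (Ioo l r)) :
    ∀ᵐ t : ℝ, t ∈ Ioc l r → ∀ p : ℕ → ℝ × ℝ,
      (∀ n, l ≤ (p n).1 ∧ (p n).1 < (p n).2 ∧ (p n).2 ≤ r ∧ (p n).1 ≤ t ∧ t ≤ (p n).2) →
      Tendsto (fun n => (p n).2 - (p n).1) atTop (𝓝 0) →
      Tendsto (fun n => intAvg g (p n).1 (p n).2) atTop (𝓝 (g t)) := by
  have hI : Integrable ((Ioo l r).indicator g) := hg.integrable_indicator measurableSet_Ioo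
  have hne : ∀ᵐ t : ℝ, t ≠ r := by simp [ae_iff]
  filter_upwards [IsUnifLocDoublingMeasure.ae_tendsto_average (μ := (volume : Measure ℝ))
    hI.locallyIntegrable 1, hne] with t ht htr htm p hp hlim
  have htI : t ∈ Ioo l r := ⟨htm.1, lt_of_le_of_ne htm.2 htr⟩
  have := ht (l := atTop) (fun n => ((p n).1 + (p n).2) / 2) (fun n => ((p n).2 - (p n).1) / 2) (by
      rw [tendsto_nhdsWithin_iff]
      refine ⟨by simpa using hlim.div_const 2, Eventually.of_forall fun n => ?_⟩
      have := (hp n).2.1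
      simp only [mem_Ioi]; linarith) (Eventually.of_forall fun n => by
      rw [one_mul, ← Real.Icc_eq_closedBall]
      exact ⟨(hp n).2.2.2.1, (hp n).2.2.2.2⟩)
  rw [indicator_of_mem htI] at this
  refine this.congr fun n => ?_
  obtain ⟨h1, h2, h3, -, -⟩ := hp n
  rw [← Real.Icc_eq_closedBall, setAverage_eq, intAvg, intervalIntegral.integral_of_le h2.le,
    integral_Icc_eq_integral_Ioo, integral_Ioc_eq_integral_Ioo, Real.volume_real_Icc_of_le h2.le,
    smul_eq_mul, div_eq_inv_mul]
  congr 1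
  apply setIntegral_congr_fun measurableSet_Ioo
  intro s hs
  have hs' : s ∈ Ioo l r := ⟨h1.trans_lt hs.1, hs.2.trans_le h3⟩
  exact indicator_of_mem hs' g

lemma abs_avg_le {ψ : ℝ → ℝ} {M a b : ℝ} (hab : a < b) (hM : ∀ t, |ψ t| ≤ M) :
    |intAvg ψ a b| ≤ M := by
  unfold intAvg
  have := intervalIntegral.norm_integral_le_of_norm_le_const (a := a) (b := b) (f := ψ) (C := M)
    (fun t _ => hM t)
  rw [abs_div, div_le_iff₀ (abs_pos.2 (by linarith))]
  exact this

open Filter Topology in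
lemma bdd_lem {ε' ε l r M : ℝ} {ψ : ℝ → ℝ} (h0 : 0 ≤ ε') (hlt : ε' < ε) (hlr : l < r)
    (h : memBMOe ε' l r ψ) (hM : ∀ t, |ψ t| ≤ M)
    {G : ℝ × ℝ → ℝ} (hGc : ContinuousOn G (parabStrip ε))
    (hG : LocallyConcaveOn (parabStrip ε) G) :
    ∫ t in l..r, G (ψ t, ψ t ^ 2) ≤ (r - l) * G (XX ψ l r) := by
  obtain ⟨θ, hθ0, hθ1, htr⟩ := tree_lem h0 hlt h hG
  choose T hT1 hT2 hT3 using fun n => htr n l r le_rfl hlr le_rfl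
  have mono : ∀ x ∈ parabStrip ε', x ∈ parabStrip ε := by
    intro x hx; exact ⟨hx.1, by nlinarith [hx.2]⟩
  have hM0 : 0 ≤ M := (abs_nonneg _).trans (hM 0)
  -- compactness
  obtain ⟨K, hK⟩ : ∃ K, ∀ x ∈ parabStrip ε, |x.1| ≤ M → |G x| ≤ K := by
    have hcl : IsClosed (parabStrip ε) := by
      have : parabStrip ε = {x : ℝ × ℝ | x.1 ^ 2 ≤ x.2} ∩ {x : ℝ × ℝ | x.2 ≤ x.1 ^ 2 + ε ^ 2} := rfl
      rw [this]
      exact (isClosed_le (by fun_prop) (by fun_prop)).inter (isClosed_le (by fun_prop) (by fun_prop))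
    have hcomp : IsCompact (parabStrip ε ∩ (Icc (-M) M ×ˢ Icc 0 (M ^ 2 + ε ^ 2))) :=
      (isCompact_Icc.prod isCompact_Icc).inter_left hcl
    obtain ⟨K, hK⟩ := hcomp.exists_bound_of_continuousOn (hGc.mono inter_subset_left)
    refine ⟨K, fun x hx hxM => hK x ⟨hx, ?_, ?_⟩⟩
    · exact abs_le.1 hxM
    · have : x.1 ^ 2 ≤ M ^ 2 := sq_le_sq' (abs_le.1 hxM).1 (abs_le.1 hxM).2
      exact ⟨(sq_nonneg _).trans hx.1, by linarith [hx.2]⟩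
  have hlim : Tendsto (fun n => ∫ t in l..r, T n t) atTop (𝓝 (∫ t in l..r, G (ψ t, ψ t ^ 2))) := by
    apply intervalIntegral.tendsto_integral_filter_of_dominated_convergence (fun _ => K)
    · refine Eventually.of_forall fun n => ?_
      exact (hT2 n).def'.aestronglyMeasurable
    · refine Eventually.of_forall fun n => Eventually.of_forall fun t ht => ?_
      rw [uIoc_of_le hlr.le] at ht
      obtain ⟨p, p1, p2, p3, p4, p5, p6, p7⟩ := hT1 n t ht
      rw [p7]
      exact hK _ (mono _ (XX_mem h p1 p2 p3)) (abs_avg_le p2 hM)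
    · simp
    · filter_upwards [lebesgue_lem h.1, lebesgue_lem h.2.1] with t ht1 ht2 ht
      rw [uIoc_of_le hlr.le] at ht
      choose p p1 p2 p3 p4 p5 p6 p7 using fun n => hT1 n t ht
      have hz : Tendsto (fun n => (p n).2 - (p n).1) atTop (𝓝 0) := by
        refine squeeze_zero (fun n => by linarith [p2 n]) p6 ?_
        simpa using (tendsto_pow_atTop_nhds_zero_of_lt_one hθ0 hθ1).mul_const (r - l)
      have q1 := ht1 ht p (fun n => ⟨p1 n, p2 n, p3 n, p4 n, p5 n⟩) hz
      have q2 := ht2 ht p (fun n => ⟨p1 n, p2 n, p3 n, p4 n, p5 n⟩) hz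
      have hin : (ψ t, ψ t ^ 2) ∈ parabStrip ε := ⟨le_rfl, by simp; positivity⟩
      have q3 : Tendsto (fun n => XX ψ (p n).1 (p n).2) atTop (𝓝[parabStrip ε] (ψ t, ψ t ^ 2)) := by
        rw [tendsto_nhdsWithin_iff]
        exact ⟨q1.prodMk_nhds q2, Eventually.of_forall fun n => mono _ (XX_mem h (p1 n) (p2 n) (p3 n))⟩
      refine Tendsto.congr (fun n => (p7 n).symm) ((hGc _ hin).tendsto.comp q3)
  exact le_of_tendsto hlim (Eventually.of_forall hT3)

lemma lip_bmo {ε l r s : ℝ} {φ T : ℝ → ℝ} (h : memBMOe ε l r φ) (hTc : Continuous T)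
    (hT0 : T 0 = 0) (hT : ∀ x y, |T x - T y| ≤ s * |x - y|) : memBMOe (s * ε) l r (fun t => T (φ t)) := by
  have hT' : ∀ x, |T x| ≤ s * |x| := by intro x; simpa [hT0] using hT x 0
  have hsq : ∀ x y, (T x - T y) ^ 2 ≤ s ^ 2 * (x - y) ^ 2 := by
    intro x y
    rw [← sq_abs (T x - T y), ← sq_abs (x - y), ← mul_pow]
    exact pow_le_pow_left₀ (abs_nonneg _) (hT x y) 2
  have hm := hTc.comp_aestronglyMeasurable h.1.aestronglyMeasurable
  have i1 : IntegrableOn (fun t => T (φ t)) (Ioo l r) := by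
    refine Integrable.mono' (h.1.norm.const_mul s) hm (Filter.Eventually.of_forall fun t => ?_)
    exact hT' _
  have i2 : IntegrableOn (fun t => T (φ t) ^ 2) (Ioo l r) := by
    refine Integrable.mono' (h.2.1.const_mul (s ^ 2)) (hm.pow 2) (Filter.Eventually.of_forall fun t => ?_)
    have := hsq (φ t) 0
    simp only [hT0, sub_zero] at this
    simpa using this
  refine ⟨i1, i2, ?_⟩
  intro c d hlc hcd hdr
  have j1 := ii_of i1 hlc hcd.le hdr
  have j2 := ii_of i2 hlc hcd.le hdr
  have k1 := ii_of h.1 hlc hcd.le hdr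
  have k2 := ii_of h.2.1 hlc hcd.le hdr
  have hd : 0 < d - c := by linarith
  set m := intAvg φ c d with hmdef
  have e1 := sq_avg_dev hcd j1 j2 (T m)
  have e2 := sq_avg_dev hcd k1 k2 m
  have hle : intAvg (fun t => (T (φ t) - T m) ^ 2) c d ≤ s ^ 2 * intAvg (fun t => (φ t - m) ^ 2) c d := by
    unfold intAvg
    rw [← mul_div_assoc, ← intervalIntegral.integral_const_mul]
    apply div_le_div_of_nonneg_right _ hd.le
    apply intervalIntegral.integral_mono_on hcd.le
    · have : (fun t => (T (φ t) - T m) ^ 2) = fun t => (T (φ t) ^ 2 - 2 * T m * T (φ t)) + T m ^ 2 := by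
        ext t; ring
      rw [this]
      exact (j2.sub (j1.const_mul _)).add (by simp)
    · have : (fun t => s ^ 2 * (φ t - m) ^ 2) = fun t => s ^ 2 * ((φ t ^ 2 - 2 * m * φ t) + m ^ 2) := by
        ext t; ring
      rw [this]
      exact ((k2.sub (k1.const_mul _)).add (by simp)).const_mul _
    · intro t _; exact hsq _ _
  have hv := h.2.2 c d hlc hcd hdr
  rw [← hmdef] at hv
  have h5 : s ^ 2 * (intAvg (fun t => φ t ^ 2) c d - m ^ 2) ≤ s ^ 2 * ε ^ 2 :=
    mul_le_mul_of_nonneg_left hv (sq_nonneg s)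
  rw [e1, e2, ← hmdef] at hle
  nlinarith [sq_nonneg (intAvg (fun t => T (φ t)) c d - T m)]

noncomputable def TT (n : ℕ) (x : ℝ) : ℝ := ((n : ℝ) / (n + 1)) * max (-(n : ℝ)) (min x n)

lemma TT_cont (n : ℕ) : Continuous (TT n) := by unfold TT; fun_prop

lemma TT_zero (n : ℕ) : TT n 0 = 0 := by
  have : (0 : ℝ) ≤ n := Nat.cast_nonneg n
  simp [TT, this]

lemma TT_s (n : ℕ) : (0 : ℝ) ≤ (n : ℝ) / (n + 1) ∧ (n : ℝ) / (n + 1) < 1 := by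
  constructor
  · positivity
  · rw [div_lt_one (by positivity)]; linarith

lemma TT_lip (n : ℕ) (x y : ℝ) : |TT n x - TT n y| ≤ ((n : ℝ) / (n + 1)) * |x - y| := by
  unfold TT
  rw [← mul_sub, abs_mul, abs_of_nonneg (TT_s n).1]
  apply mul_le_mul_of_nonneg_left _ (TT_s n).1
  exact (abs_max_sub_max_le_max _ _ _ _).trans (by
    simp only [sub_self, abs_zero]
    refine max_le (abs_nonneg _) ((abs_min_sub_min_le_max _ _ _ _).trans ?_)
    simp)

lemma TT_le (n : ℕ) (x : ℝ) : |TT n x| ≤ |x| := by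
  have := TT_lip n x 0
  rw [TT_zero, sub_zero, sub_zero] at this
  exact this.trans (mul_le_of_le_one_left (abs_nonneg _) (TT_s n).2.le)

lemma TT_bdd (n : ℕ) (x : ℝ) : |TT n x| ≤ n := by
  unfold TT
  rw [abs_mul, abs_of_nonneg (TT_s n).1]
  have h0 : (0 : ℝ) ≤ n := Nat.cast_nonneg n
  have : |max (-(n : ℝ)) (min x n)| ≤ n := by
    rw [abs_le]
    exact ⟨le_max_left _ _, max_le (by linarith) (min_le_right _ _)⟩
  exact (mul_le_of_le_one_left (abs_nonneg _) (TT_s n).2.le).trans this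

open Filter Topology in
lemma TT_tendsto (x : ℝ) : Tendsto (fun n => TT n x) atTop (𝓝 x) := by
  have h1 : Tendsto (fun n : ℕ => ((n : ℝ) / (n + 1)) * x) atTop (𝓝 x) := by
    simpa using (tendsto_natCast_div_add_atTop (1 : ℝ)).mul_const x
  refine h1.congr' ?_
  obtain ⟨N, hN⟩ := exists_nat_ge |x|
  filter_upwards [eventually_ge_atTop N] with n hn
  have hn' : |x| ≤ n := hN.trans (by exact_mod_cast hn)
  have := abs_le.1 hn'
  unfold TT
  rw [min_eq_left this.2, max_eq_right this.1]

lemma bmo_mono {ε' ε l r : ℝ} {φ : ℝ → ℝ} (h : ε' ^ 2 ≤ ε ^ 2) (hφ : memBMOe ε' l r φ) :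
    memBMOe ε l r φ :=
  ⟨hφ.1, hφ.2.1, fun c d h1 h2 h3 => (hφ.2.2 c d h1 h2 h3).trans h⟩

lemma TT_bmo {ε l r : ℝ} {φ : ℝ → ℝ} (n : ℕ) (h : memBMOe ε l r φ) :
    memBMOe (((n : ℝ) / (n + 1)) * ε) l r (fun t => TT n (φ t)) :=
  lip_bmo h (TT_cont n) (TT_zero n) (TT_lip n)

lemma TT_XX_mem {ε l r : ℝ} {φ : ℝ → ℝ} (hlr : l < r) (n : ℕ) (h : memBMOe ε l r φ) :
    XX (fun t => TT n (φ t)) l r ∈ parabStrip ε := by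
  refine XX_mem (bmo_mono ?_ (TT_bmo n h)) le_rfl hlr le_rfl
  rw [mul_pow]
  exact mul_le_of_le_one_left (sq_nonneg _) (pow_le_one₀ (TT_s n).1 (TT_s n).2.le)

open Filter Topology in
lemma TT_XX_lim {ε l r : ℝ} {φ : ℝ → ℝ} (hlr : l < r) (h : memBMOe ε l r φ) :
    Tendsto (fun n => XX (fun t => TT n (φ t)) l r) atTop (𝓝[parabStrip ε] (XX φ l r)) := by
  rw [tendsto_nhdsWithin_iff]
  refine ⟨?_, Eventually.of_forall fun n => TT_XX_mem hlr n h⟩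
  have i1 := ii_of h.1 le_rfl hlr.le le_rfl
  have i2 := ii_of h.2.1 le_rfl hlr.le le_rfl
  have hm : ∀ n, AEStronglyMeasurable (fun t => TT n (φ t)) (volume.restrict (uIoc l r)) :=
    fun n => (TT_cont n).comp_aestronglyMeasurable i1.def'.aestronglyMeasurable
  refine Tendsto.prodMk_nhds (Tendsto.div_const ?_ _) (Tendsto.div_const ?_ _)
  · apply intervalIntegral.tendsto_integral_filter_of_dominated_convergence (fun t => |φ t|)
    · exact Eventually.of_forall hm
    · exact Eventually.of_forall fun n => Eventually.of_forall fun t _ => TT_le n _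
    · exact i1.abs
    · exact Eventually.of_forall fun t _ => TT_tendsto _
  · apply intervalIntegral.tendsto_integral_filter_of_dominated_convergence (fun t => φ t ^ 2)
    · exact Eventually.of_forall fun n => (hm n).pow 2
    · refine Eventually.of_forall fun n => Eventually.of_forall fun t _ => ?_
      rw [Real.norm_eq_abs, abs_of_nonneg (sq_nonneg _)]
      exact sq_le_sq.2 (TT_le n _)
    · exact i2
    · exact Eventually.of_forall fun t _ => (TT_tendsto _).pow 2

lemma TT_ineq {ε l r : ℝ} {φ : ℝ → ℝ} (hε : 0 < ε) (hlr : l < r) (h : memBMOe ε l r φ)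
    {G : ℝ × ℝ → ℝ} (hGc : ContinuousOn G (parabStrip ε))
    (hG : LocallyConcaveOn (parabStrip ε) G) (n : ℕ) :
    ∫ t in l..r, G (TT n (φ t), TT n (φ t) ^ 2) ≤ (r - l) * G (XX (fun t => TT n (φ t)) l r) :=
  bdd_lem (mul_nonneg (TT_s n).1 hε.le) (mul_lt_of_lt_one_left hε (TT_s n).2) hlr (TT_bmo n h)
    (fun t => TT_bdd n _) hGc hG

open Filter Topology in
lemma exp_int {ε l r : ℝ} {φ : ℝ → ℝ} (hε : 0 < ε) (hε1 : ε < 1) (hlr : l < r)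
    (h : memBMOe ε l r φ) : IntegrableOn (fun t => Real.exp (φ t)) (Ioo l r) := by
  have hlim := ((Gexp_cont ε).tendsto _).comp ((TT_XX_lim hlr h).mono_right nhdsWithin_le_nhds)
  obtain ⟨K, hK⟩ := hlim.bddAbove_range
  have hk : 0 < (1 - ε) * Real.exp ε := mul_pos (by linarith) (Real.exp_pos _)
  have hbd : ∀ u : ℝ, Gexp ε (u, u ^ 2) = (1 - ε) * Real.exp ε * Real.exp u := by
    intro u
    have : wfun ε (u, u ^ 2) = ε := by simp [wfun, Real.sqrt_sq hε.le]
    rw [Gexp, this, Real.exp_add]; ring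
  have hmeas : ∀ n, AEStronglyMeasurable (fun t => Real.exp (TT n (φ t))) (volume.restrict (Ioo l r)) :=
    fun n => (Real.continuous_exp.comp (TT_cont n)).comp_aestronglyMeasurable h.1.aestronglyMeasurable
  have hint : ∀ n, IntegrableOn (fun t => Real.exp (TT n (φ t))) (Ioo l r) := by
    intro n
    refine Integrable.mono' (g := fun _ => Real.exp n) (integrable_const _) (hmeas n)
      (Eventually.of_forall fun t => ?_)
    rw [Real.norm_eq_abs, Real.abs_exp, Real.exp_le_exp]
    exact (abs_le.1 (TT_bdd n _)).2
  have hle : ∀ n, ∫ t in Ioo l r, Real.exp (TT n (φ t)) ≤ (r - l) * K / ((1 - ε) * Real.exp ε) := by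
    intro n
    have h1 := TT_ineq hε hlr h (Gexp_cont ε).continuousOn (Gexp_conc ε) n
    simp only [hbd] at h1
    rw [intervalIntegral.integral_const_mul, intervalIntegral.integral_of_le hlr.le,
      integral_Ioc_eq_integral_Ioo] at h1
    rw [le_div_iff₀ hk, mul_comm]
    exact h1.trans (mul_le_mul_of_nonneg_left (hK ⟨n, rfl⟩) (by linarith))
  refine integrable_of_tendsto (G := fun n t => Real.exp (TT n (φ t)))
    (Eventually.of_forall fun t => (Real.continuous_exp.tendsto _).comp (TT_tendsto _)) hmeas ?_
  refine ne_top_of_le_ne_top (ENNReal.ofReal_ne_top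
    (r := (r - l) * K / ((1 - ε) * Real.exp ε))) ?_
  refine liminf_le_of_frequently_le' (Frequently.of_forall fun n => ?_)
  have := ofReal_integral_norm_eq_lintegral_enorm (hint n)
  rw [← this]
  apply ENNReal.ofReal_le_ofReal
  simpa using hle n

lemma exp_abs_int {ε ε₀ l r : ℝ} {φ : ℝ → ℝ} (hε : 0 < ε) (hε1 : ε < ε₀) (hlr : l < r)
    (h : memBMOe ε l r φ) : IntegrableOn (fun t => Real.exp (|φ t| / ε₀)) (Ioo l r) := by
  have h0 : 0 < ε₀ := by linarith
  have e : ε₀⁻¹ * ε < 1 := by rw [inv_mul_lt_iff₀ h0]; linarith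
  have k1 := exp_int (by positivity) e hlr (lip_bmo (s := ε₀⁻¹) (T := fun x => x / ε₀) h (by fun_prop)
    (by simp) (fun x y => by
      rw [← sub_div, abs_div, abs_of_pos h0, div_eq_inv_mul]))
  have k2 := exp_int (by positivity) e hlr (lip_bmo (s := ε₀⁻¹) (T := fun x => -x / ε₀) h (by fun_prop)
    (by simp) (fun x y => by
      rw [← sub_div, abs_div, abs_of_pos h0, div_eq_inv_mul, neg_sub_neg, abs_sub_comm]))
  refine Integrable.mono' (k1.add k2) ?_ (Filter.Eventually.of_forall fun t => ?_)
  · exact (by fun_prop : Continuous fun x : ℝ => Real.exp (|x| / ε₀)).comp_aestronglyMeasurable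
      h.1.aestronglyMeasurable
  · rw [Real.norm_eq_abs, Real.abs_exp]
    simp only [Pi.add_apply]
    rcases abs_choice (φ t) with h' | h' <;> rw [h']
    · linarith [Real.exp_pos (-φ t / ε₀)]
    · linarith [Real.exp_pos (φ t / ε₀)]

lemma growth_half {ε₀ : ℝ} (h0 : 0 < ε₀) {f : ℝ → ℝ} (hf : ContDiff ℝ 1 f)
    (h1 : Integrable (fun t => f t * Real.exp (-|t| / ε₀)))
    (h2 : Integrable (fun t => deriv f t * Real.exp (-|t| / ε₀))) :
    ∃ C, ∀ t, 0 ≤ t → |f t| ≤ C * Real.exp (|t| / ε₀) := by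
  have hd : ∀ t, HasDerivAt (fun t => f t * Real.exp (-t / ε₀))
      (deriv f t * Real.exp (-t / ε₀) - ε₀⁻¹ * (f t * Real.exp (-t / ε₀))) t := by
    intro t
    have a1 := (hf.differentiable (by norm_num) t).hasDerivAt
    have a2 := ((hasDerivAt_neg t).div_const ε₀).exp
    refine (a1.mul a2).congr_deriv ?_
    field_simp; ring
  have hI : Integrable (fun t => deriv f t * Real.exp (-|t| / ε₀)
      - ε₀⁻¹ * (f t * Real.exp (-|t| / ε₀))) := h2.sub (h1.const_mul _)
  have hdc : Continuous (deriv f) := hf.continuous_deriv le_rfl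
  have hfc := hf.continuous
  refine ⟨|f 0| + ∫ t, ‖deriv f t * Real.exp (-|t| / ε₀)
      - ε₀⁻¹ * (f t * Real.exp (-|t| / ε₀))‖, ?_⟩
  intro t ht
  have ftc := intervalIntegral.integral_eq_sub_of_hasDerivAt (a := 0) (b := t) (fun s _ => hd s)
    (Continuous.intervalIntegrable (by fun_prop) _ _)
  have hle : |∫ s in (0 : ℝ)..t, (deriv f s * Real.exp (-s / ε₀) - ε₀⁻¹ * (f s * Real.exp (-s / ε₀)))|
      ≤ ∫ t, ‖deriv f t * Real.exp (-|t| / ε₀) - ε₀⁻¹ * (f t * Real.exp (-|t| / ε₀))‖ := by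
    rw [intervalIntegral.integral_of_le ht]
    have : ∫ s in Ioc 0 t, (deriv f s * Real.exp (-s / ε₀) - ε₀⁻¹ * (f s * Real.exp (-s / ε₀)))
      = ∫ s in Ioc 0 t, (deriv f s * Real.exp (-|s| / ε₀) - ε₀⁻¹ * (f s * Real.exp (-|s| / ε₀))) := by
      apply setIntegral_congr_fun measurableSet_Ioc
      intro s hs
      simp only [abs_of_pos hs.1]
    rw [this]
    refine le_trans (norm_integral_le_integral_norm (fun s => deriv f s * Real.exp (-|s| / ε₀) - ε₀⁻¹ * (f s * Real.exp (-|s| / ε₀)))) ?_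
    exact setIntegral_le_integral hI.norm (Filter.Eventually.of_forall fun s => norm_nonneg _)
  rw [ftc] at hle
  simp only [neg_zero, zero_div, Real.exp_zero, mul_one] at hle
  have h3 : |f t * Real.exp (-t / ε₀)| ≤ |f 0| + ∫ t, ‖deriv f t * Real.exp (-|t| / ε₀)
      - ε₀⁻¹ * (f t * Real.exp (-|t| / ε₀))‖ := by
    have := abs_sub_abs_le_abs_sub (f t * Real.exp (-t / ε₀)) (f 0)
    linarith
  rw [abs_mul, Real.abs_exp] at h3
  have h4 := mul_le_mul_of_nonneg_right h3 (Real.exp_pos (t / ε₀)).le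
  rw [mul_assoc, ← Real.exp_add] at h4
  have : -t / ε₀ + t / ε₀ = 0 := by ring
  rw [this, Real.exp_zero, mul_one] at h4
  rwa [abs_of_nonneg ht]

lemma growth {ε₀ : ℝ} (h0 : 0 < ε₀) {f : ℝ → ℝ} (hf : ContDiff ℝ 1 f)
    (h1 : Integrable (fun t => f t * Real.exp (-|t| / ε₀)))
    (h2 : Integrable (fun t => deriv f t * Real.exp (-|t| / ε₀))) :
    ∃ C, ∀ t, |f t| ≤ C * Real.exp (|t| / ε₀) := by
  obtain ⟨C1, hC1⟩ := growth_half h0 hf h1 h2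
  obtain ⟨C2, hC2⟩ := growth_half (f := fun t => f (-t)) h0 (hf.comp contDiff_neg)
    (by simpa using h1.comp_neg) (by
      have := h2.comp_neg.neg
      refine this.congr (Filter.Eventually.of_forall fun t => ?_)
      simp [deriv_comp_neg])
  refine ⟨max C1 C2, fun t => ?_⟩
  rcases le_total 0 t with ht | ht
  · exact (hC1 t ht).trans (mul_le_mul_of_nonneg_right (le_max_left _ _) (Real.exp_pos _).le)
  · have := hC2 (-t) (by linarith)
    simp only [neg_neg, abs_neg] at this
    exact this.trans (mul_le_mul_of_nonneg_right (le_max_right _ _) (Real.exp_pos _).le)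

open Filter Topology in
lemma part_one {ε ε₀ : ℝ} (hε : 0 < ε) (hεε₀ : ε < ε₀) {f f3 : ℝ → ℝ}
    (hf : memWcl ε₀ f f3) {G : ℝ × ℝ → ℝ}
    (hGcont : ContinuousOn G (parabStrip ε))
    (hGconc : LocallyConcaveOn (parabStrip ε) G)
    (hGbd : ∀ u : ℝ, G (u, u ^ 2) = f u) {l r : ℝ} (hlr : l < r) {φ : ℝ → ℝ}
    (hφ : memBMOe ε l r φ) :
      IntegrableOn (fun t => f (φ t)) (Ioo l r) ∧
      intAvg (fun t => f (φ t)) l r ≤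
        G (intAvg φ l r, intAvg (fun t => (φ t) ^ 2) l r) := by
  have h0 : 0 < ε₀ := by linarith
  obtain ⟨C, hC⟩ := growth h0 (hf.1.of_le (by norm_num)) hf.2.2.1 hf.2.2.2.1
  have hC0 : 0 ≤ C := by
    have := (abs_nonneg _).trans (hC 0)
    simpa using this
  have hE := exp_abs_int hε hεε₀ hlr hφ
  have hfc := hf.1.continuous
  have hint : IntegrableOn (fun t => f (φ t)) (Ioo l r) :=
    Integrable.mono' (hE.const_mul C) (hfc.comp_aestronglyMeasurable hφ.1.aestronglyMeasurable)
      (Eventually.of_forall fun t => hC _)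
  refine ⟨hint, ?_⟩
  have hi := ii_of hφ.1 le_rfl hlr.le le_rfl
  have hlim : Tendsto (fun n => ∫ t in l..r, f (TT n (φ t))) atTop (𝓝 (∫ t in l..r, f (φ t))) := by
    apply intervalIntegral.tendsto_integral_filter_of_dominated_convergence
      (fun t => C * Real.exp (|φ t| / ε₀))
    · exact Eventually.of_forall fun n =>
        (hfc.comp (TT_cont n)).comp_aestronglyMeasurable hi.def'.aestronglyMeasurable
    · refine Eventually.of_forall fun n => Eventually.of_forall fun t _ => (hC _).trans ?_
      apply mul_le_mul_of_nonneg_left _ hC0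
      apply Real.exp_le_exp.2
      exact div_le_div_of_nonneg_right (TT_le n _) h0.le
    · exact ii_of (hE.const_mul C) le_rfl hlr.le le_rfl
    · exact Eventually.of_forall fun t _ => (hfc.tendsto _).comp (TT_tendsto _)
  have hG := ((hGcont _ (XX_mem hφ le_rfl hlr le_rfl)).tendsto.comp (TT_XX_lim hlr hφ)).const_mul (r - l)
  have hfin := le_of_tendsto_of_tendsto' hlim hG (fun n => by
    have := TT_ineq hε hlr hφ hGcont hGconc n
    simp only [hGbd] at this
    exact this)
  rw [intAvg, div_le_iff₀ (by linarith), mul_comm]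
  exact hfin

/-- two-valued test function -/
noncomputable def stepf (m δ t : ℝ) : ℝ := if t ≤ 1 / 2 then m - δ else m + δ

lemma stepf_meas (m δ : ℝ) : Measurable (stepf m δ) :=
  Measurable.ite measurableSet_Iic measurable_const measurable_const

lemma stepf_sq (m δ t : ℝ) : stepf m δ t ^ 2 = 2 * m * stepf m δ t + (δ ^ 2 - m ^ 2) := by
  unfold stepf; split_ifs <;> ring

lemma stepf_int (m δ : ℝ) : IntegrableOn (stepf m δ) (Ioo 0 1) := by
  refine Integrable.mono' (g := fun _ => |m| + |δ|) (integrable_const _)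
    (stepf_meas m δ).aestronglyMeasurable (Filter.Eventually.of_forall fun t => ?_)
  unfold stepf
  split_ifs
  · exact abs_sub _ _
  · exact abs_add_le _ _

lemma stepf_int2 (m δ : ℝ) : IntegrableOn (fun t => stepf m δ t ^ 2) (Ioo 0 1) := by
  simp only [stepf_sq]
  exact ((stepf_int m δ).const_mul _).add (integrable_const _)

lemma stepf_avg2 (m δ : ℝ) {c d : ℝ} (h0 : 0 ≤ c) (hcd : c < d) (h1 : d ≤ 1) :
    intAvg (fun t => stepf m δ t ^ 2) c d = 2 * m * intAvg (stepf m δ) c d + (δ ^ 2 - m ^ 2) := by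
  have hd : d - c ≠ 0 := by linarith
  unfold intAvg
  simp only [stepf_sq]
  rw [intervalIntegral.integral_add ((ii_of (stepf_int m δ) h0 hcd.le h1).const_mul _) (by simp),
    intervalIntegral.integral_const_mul]
  simp
  field_simp

lemma stepf_avg (m δ : ℝ) : intAvg (stepf m δ) 0 1 = m := by
  unfold intAvg
  rw [← intervalIntegral.integral_add_adjacent_intervals (b := 1 / 2)
    (ii_of (stepf_int m δ) le_rfl (by norm_num) (by norm_num))
    (ii_of (stepf_int m δ) (by norm_num) (by norm_num) le_rfl)]
  have e1 : ∫ t in (0 : ℝ)..(1 / 2), stepf m δ t = ∫ t in (0 : ℝ)..(1 / 2), (m - δ) := by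
    apply intervalIntegral.integral_congr_ae
    refine Filter.Eventually.of_forall fun t ht => ?_
    rw [uIoc_of_le (by norm_num)] at ht
    simp only [stepf, if_pos ht.2]
  have e2 : ∫ t in (1 / 2 : ℝ)..1, stepf m δ t = ∫ t in (1 / 2 : ℝ)..1, (m + δ) := by
    apply intervalIntegral.integral_congr_ae
    refine Filter.Eventually.of_forall fun t ht => ?_
    rw [uIoc_of_le (by norm_num)] at ht
    simp only [stepf, if_neg (not_le.2 ht.1)]
  rw [e1, e2]
  simp
  ring

lemma stepf_bmo {ε m δ : ℝ} (h : δ ^ 2 ≤ ε ^ 2) : memBMOe ε 0 1 (stepf m δ) := by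
  refine ⟨stepf_int m δ, stepf_int2 m δ, fun c d h0 hcd h1 => ?_⟩
  rw [stepf_avg2 m δ h0 hcd h1]
  nlinarith [sq_nonneg (intAvg (stepf m δ) c d - m)]

theorem stmt4 (ε ε₀ : ℝ) (hε : 0 < ε) (hεε₀ : ε < ε₀) (f f3 : ℝ → ℝ)
    (hf : memWcl ε₀ f f3) (G : ℝ × ℝ → ℝ)
    (hGcont : ContinuousOn G (parabStrip ε))
    (hGconc : LocallyConcaveOn (parabStrip ε) G)
    (hGbd : ∀ u : ℝ, G (u, u ^ 2) = f u) :
    (∀ l r : ℝ, l < r → ∀ φ : ℝ → ℝ, memBMOe ε l r φ →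
      IntegrableOn (fun t => f (φ t)) (Ioo l r) ∧
      intAvg (fun t => f (φ t)) l r ≤
        G (intAvg φ l r, intAvg (fun t => (φ t) ^ 2) l r)) ∧
    (∀ x ∈ parabStrip ε, bellmanFn ε f x.1 x.2 ≤ G x) := by
  refine ⟨fun l r hlr φ hφ => part_one hε hεε₀ hf hGcont hGconc hGbd hlr hφ, ?_⟩
  intro x hx
  refine csSup_le ?_ ?_
  · have hsq : √(x.2 - x.1 ^ 2) ^ 2 = x.2 - x.1 ^ 2 := Real.sq_sqrt (by linarith [hx.1])
    have hb : memBMOe ε 0 1 (stepf x.1 √(x.2 - x.1 ^ 2)) :=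
      stepf_bmo (by rw [hsq]; linarith [hx.2])
    refine ⟨_, stepf x.1 √(x.2 - x.1 ^ 2), hb,
      (part_one hε hεε₀ hf hGcont hGconc hGbd one_pos hb).1, stepf_avg _ _, ?_, rfl⟩
    rw [stepf_avg2 _ _ le_rfl one_pos le_rfl, stepf_avg, hsq]
    ring
  · rintro y ⟨φ, hφ, -, h1, h2, rfl⟩
    have := (part_one hε hεε₀ hf hGcont hGconc hGbd one_pos hφ).2
    rw [h1, h2] at this
    exact this
end

section
/- Let Ω ⊆ ℝ² be an open set and let G : Ω → ℝ be twice continuously differentiable with G_{x₁x₁}G_{x₂x₂} − (G_{x₁x₂})² = 0 at every point of Ω, and suppose that at every point of Ω at least one of G_{x₁x₁}, G_{x₂x₂} is nonzero. Let γ : (α,β) → Ω be a C¹ curve such that for every s ∈ (α,β), γ'(s) ≠ 0 and the Hessian matrix of G at γ(s) annihilates γ'(s). Then the functions s ↦ G_{x₁}(γ(s)), s ↦ G_{x₂}(γ(s)), and s ↦ G(γ(s)) − G_{x₁}(γ(s))·γ₁(s) − G_{x₂}(γ(s))·γ₂(s) are constant on (α,β), and the image of γ is contained in a straight line. -/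
open Set

/-- First partial derivative in `x₁`. -/
noncomputable def pd1 (G : ℝ × ℝ → ℝ) (x : ℝ × ℝ) : ℝ := fderiv ℝ G x (1, 0)

/-- First partial derivative in `x₂`. -/
noncomputable def pd2 (G : ℝ × ℝ → ℝ) (x : ℝ × ℝ) : ℝ := fderiv ℝ G x (0, 1)

/-- Second partial derivative `G_{x₁x₁}`. -/
noncomputable def pd11 (G : ℝ × ℝ → ℝ) (x : ℝ × ℝ) : ℝ := fderiv ℝ (pd1 G) x (1, 0)

/-- Second partial derivative `G_{x₁x₂}`. -/
noncomputable def pd12 (G : ℝ × ℝ → ℝ) (x : ℝ × ℝ) : ℝ := fderiv ℝ (pd1 G) x (0, 1)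

/-- Second partial derivative `G_{x₂x₁}`. -/
noncomputable def pd21 (G : ℝ × ℝ → ℝ) (x : ℝ × ℝ) : ℝ := fderiv ℝ (pd2 G) x (1, 0)

/-- Second partial derivative `G_{x₂x₂}`. -/
noncomputable def pd22 (G : ℝ × ℝ → ℝ) (x : ℝ × ℝ) : ℝ := fderiv ℝ (pd2 G) x (0, 1)

open Filter Topology

lemma aux_L (f g : ℝ × ℝ → ℝ) (ℓ : ℝ × ℝ →L[ℝ] ℝ) (x0 : ℝ × ℝ)
    (hf : ContDiffAt ℝ 1 f x0) (hg : ContDiffAt ℝ 1 g x0)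
    (h : ∀ᶠ x in 𝓝 x0, ∃ c : ℝ, fderiv ℝ g x = c • fderiv ℝ f x)
    (hinj : ∀ v, fderiv ℝ f x0 v = 0 → ℓ v = 0 → v = 0) :
    ∃ ψ : ℝ → ℝ, ∀ᶠ x in 𝓝 x0, fderiv ℝ g x = ψ (f x) • fderiv ℝ f x := by
  have hne : (1 : WithTop ℕ∞) ≠ 0 := one_ne_zero
  let T : ℝ × ℝ →L[ℝ] ℝ × ℝ := (fderiv ℝ f x0).prod ℓ
  have hTinj : Function.Injective (T : ℝ × ℝ →ₗ[ℝ] ℝ × ℝ) := by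
    refine (injective_iff_map_eq_zero _).2 fun v hv => ?_
    have hv' : ((fderiv ℝ f x0 v, ℓ v) : ℝ × ℝ) = 0 := hv
    rw [Prod.mk_eq_zero] at hv'
    exact hinj v hv'.1 hv'.2
  let e : (ℝ × ℝ) ≃L[ℝ] ℝ × ℝ :=
    (LinearEquiv.ofInjectiveEndo (T : ℝ × ℝ →ₗ[ℝ] ℝ × ℝ) hTinj).toContinuousLinearEquiv
  have he : (e : ℝ × ℝ →L[ℝ] ℝ × ℝ) = T := by
    ext v <;> rfl
  let Φ : ℝ × ℝ → ℝ × ℝ := fun x => (f x, ℓ x)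
  have hΦ : ContDiffAt ℝ 1 Φ x0 := hf.prodMk ℓ.contDiff.contDiffAt
  have hΦ' : HasFDerivAt Φ (e : ℝ × ℝ →L[ℝ] ℝ × ℝ) x0 := by
    rw [he]
    exact (hf.differentiableAt hne).hasFDerivAt.prodMk ℓ.hasFDerivAt
  have hS := hΦ.hasStrictFDerivAt' hΦ' hne
  let Ψ := hΦ.localInverse hΦ' hne
  have hΨ0 : Ψ (Φ x0) = x0 := hΦ.localInverse_apply_image hΦ' hne
  have hΨ : ContDiffAt ℝ 1 Ψ (Φ x0) := hΦ.to_localInverse hΦ' hne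
  have hl : ∀ᶠ x in 𝓝 x0, Ψ (Φ x) = x := hS.eventually_left_inverse
  have hr : ∀ᶠ z in 𝓝 (Φ x0), Φ (Ψ z) = z := hS.eventually_right_inverse
  have hΨt : Tendsto Ψ (𝓝 (Φ x0)) (𝓝 x0) := by
    have := hΨ.continuousAt.tendsto
    rwa [hΨ0] at this
  have hfe := hf.eventually (by simp)
  have hge := hg.eventually (by simp)
  have hall := ((((hr.eventually_nhds).and (hΨ.eventually (by simp))).and
    (hΨt.eventually hfe)).and (hΨt.eventually hge)).and (hΨt.eventually h)
  obtain ⟨r, hr0, hB⟩ := Metric.eventually_nhds_iff_ball.1 hall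
  have hsplit : ∀ z : ℝ × ℝ, z ∈ Metric.ball (Φ x0) r ↔
      z.1 ∈ Metric.ball (f x0) r ∧ z.2 ∈ Metric.ball (ℓ x0) r := by
    intro z
    rw [← Set.mem_prod, ball_prod_same]
  have hder : ∀ z ∈ Metric.ball (Φ x0) r, HasDerivAt (fun y => g (Ψ (z.1, y))) 0 z.2 := by
    intro z hz
    obtain ⟨⟨⟨⟨h1, h2⟩, h3⟩, h4⟩, c, h5⟩ := hB z hz
    have hcur : HasDerivAt (fun y : ℝ => ((z.1, y) : ℝ × ℝ)) (0, 1) z.2 :=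
      (hasDerivAt_const _ _).prodMk (hasDerivAt_id _)
    have hΨd : HasDerivAt (fun y : ℝ => Ψ (z.1, y)) (fderiv ℝ Ψ z (0, 1)) z.2 :=
      HasFDerivAt.comp_hasDerivAt (l := Ψ) (f := fun y : ℝ => ((z.1, y) : ℝ × ℝ)) z.2
        (h2.differentiableAt hne).hasFDerivAt hcur
    have hfd : HasDerivAt (fun y : ℝ => f (Ψ (z.1, y)))
        (fderiv ℝ f (Ψ z) (fderiv ℝ Ψ z (0, 1))) z.2 :=
      HasFDerivAt.comp_hasDerivAt (l := f) (f := fun y : ℝ => Ψ (z.1, y)) z.2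
        (h3.differentiableAt hne).hasFDerivAt hΨd
    have hgd : HasDerivAt (fun y : ℝ => g (Ψ (z.1, y)))
        (fderiv ℝ g (Ψ z) (fderiv ℝ Ψ z (0, 1))) z.2 :=
      HasFDerivAt.comp_hasDerivAt (l := g) (f := fun y : ℝ => Ψ (z.1, y)) z.2
        (h4.differentiableAt hne).hasFDerivAt hΨd
    have hev : ∀ᶠ y in 𝓝 z.2, f (Ψ (z.1, y)) = z.1 := by
      have ht : Tendsto (fun y : ℝ => ((z.1, y) : ℝ × ℝ)) (𝓝 z.2) (𝓝 z) :=
        hcur.continuousAt.tendsto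
      filter_upwards [ht.eventually h1] with y hy
      exact congrArg Prod.fst hy
    have h0 : fderiv ℝ f (Ψ z) (fderiv ℝ Ψ z (0, 1)) = 0 :=
      hfd.unique ((hasDerivAt_const z.2 z.1).congr_of_eventuallyEq hev)
    have : fderiv ℝ g (Ψ z) (fderiv ℝ Ψ z (0, 1)) = 0 := by
      rw [h5, ContinuousLinearMap.smul_apply, h0, smul_zero]
    rwa [this] at hgd
  let φ : ℝ → ℝ := fun p => g (Ψ (p, ℓ x0))
  have hK : ∀ z ∈ Metric.ball (Φ x0) r, g (Ψ z) = φ z.1 := by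
    intro z hz
    have hz' := (hsplit z).1 hz
    have hd : ∀ y ∈ Metric.ball (ℓ x0) r, HasDerivAt (fun y => g (Ψ (z.1, y))) 0 y :=
      fun y hy => hder (z.1, y) ((hsplit _).2 ⟨hz'.1, hy⟩)
    exact Metric.isOpen_ball.is_const_of_deriv_eq_zero
      (convex_ball _ _).isPreconnected
      (fun y hy => (hd y hy).differentiableAt.differentiableWithinAt)
      (fun y hy => (hd y hy).deriv) hz'.2 (Metric.mem_ball_self hr0)
  have hφ : ∀ p ∈ Metric.ball (f x0) r, DifferentiableAt ℝ φ p := by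
    intro p hp
    obtain ⟨⟨⟨⟨h1, h2⟩, h3⟩, h4⟩, c, h5⟩ :=
      hB (p, ℓ x0) ((hsplit _).2 ⟨hp, Metric.mem_ball_self hr0⟩)
    have hcur : DifferentiableAt ℝ (fun p : ℝ => ((p, ℓ x0) : ℝ × ℝ)) p := by fun_prop
    have a1 : DifferentiableAt ℝ (fun p : ℝ => Ψ (p, ℓ x0)) p :=
      DifferentiableAt.comp (g := Ψ) p (h2.differentiableAt hne) hcur
    exact DifferentiableAt.comp (g := g) p (h4.differentiableAt hne) a1
  refine ⟨deriv φ, ?_⟩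
  have hball : ∀ᶠ x in 𝓝 x0, Φ x ∈ Metric.ball (Φ x0) r :=
    hΦ.continuousAt.eventually (Metric.ball_mem_nhds _ hr0)
  have hgφ : ∀ᶠ x in 𝓝 x0, g x = φ (f x) := by
    filter_upwards [hl, hball] with x h1 h2
    have := hK _ h2
    rwa [h1] at this
  filter_upwards [hgφ.eventually_nhds, hball, hfe] with x h1 h2 h3
  have a1 := (hφ _ ((hsplit _).1 h2).1).hasDerivAt
  have a2 : HasFDerivAt (fun x => φ (f x)) (deriv φ (f x) • fderiv ℝ f x) x :=
    HasDerivAt.comp_hasFDerivAt (h₂ := φ) x a1 (h3.differentiableAt hne).hasFDerivAt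
  exact (a2.congr_of_eventuallyEq h1).fderiv

lemma aux_const_s5 (α β : ℝ) (f : ℝ → ℝ) (h : ∀ s ∈ Ioo α β, HasDerivAt f 0 s) :
    ∀ s ∈ Ioo α β, ∀ t ∈ Ioo α β, f s = f t := fun s hs t ht =>
  isOpen_Ioo.is_const_of_deriv_eq_zero isPreconnected_Ioo
    (fun y hy => (h y hy).differentiableAt.differentiableWithinAt)
    (fun y hy => (h y hy).deriv) hs ht

lemma aux_pair (L : ℝ × ℝ →L[ℝ] ℝ) (v : ℝ × ℝ) :
    L v = L (1, 0) * v.1 + L (0, 1) * v.2 := by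
  have : v = v.1 • ((1, 0) : ℝ × ℝ) + v.2 • ((0, 1) : ℝ × ℝ) := by ext <;> simp
  conv_lhs => rw [this]
  rw [map_add, map_smul, map_smul]
  simp [mul_comm]

lemma aux_ext (L M : ℝ × ℝ →L[ℝ] ℝ) (h1 : L (1, 0) = M (1, 0)) (h2 : L (0, 1) = M (0, 1)) :
    L = M := by
  ext v <;> simp [h1, h2]

lemma aux_line (α β a b : ℝ) (γ : ℝ → ℝ × ℝ) (hab : a ≠ 0 ∨ b ≠ 0) (c : ℝ)
    (h : ∀ s ∈ Ioo α β, a * (γ s).1 + b * (γ s).2 = c) :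
    ∃ p v : ℝ × ℝ, ∀ s ∈ Ioo α β, ∃ c : ℝ, γ s = p + c • v := by
  have hp : a ^ 2 + b ^ 2 ≠ 0 := by
    rcases hab with h | h <;> positivity
  refine ⟨(a * c / (a ^ 2 + b ^ 2), b * c / (a ^ 2 + b ^ 2)), (-b, a), fun s hs =>
    ⟨(a * (γ s).2 - b * (γ s).1) / (a ^ 2 + b ^ 2), ?_⟩⟩
  have := h s hs
  ext
  · simp only [Prod.fst_add, Prod.smul_fst, smul_eq_mul]
    field_simp
    rw [← this]; ring
  · simp only [Prod.snd_add, Prod.smul_snd, smul_eq_mul]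
    field_simp
    rw [← this]; ring

theorem stmt5 (Ω : Set (ℝ × ℝ)) (hΩ : IsOpen Ω) (G : ℝ × ℝ → ℝ)
    (hG : ContDiffOn ℝ 2 G Ω)
    (hMA : ∀ x ∈ Ω, pd11 G x * pd22 G x - (pd12 G x) ^ 2 = 0)
    (hnd : ∀ x ∈ Ω, pd11 G x ≠ 0 ∨ pd22 G x ≠ 0)
    (α β : ℝ) (γ γ' : ℝ → ℝ × ℝ)
    (hγΩ : ∀ s ∈ Ioo α β, γ s ∈ Ω)
    (hγ' : ∀ s ∈ Ioo α β, HasDerivAt γ (γ' s) s)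
    (hγ'cont : ContinuousOn γ' (Ioo α β))
    (hγ'ne : ∀ s ∈ Ioo α β, γ' s ≠ 0)
    (hker : ∀ s ∈ Ioo α β,
      pd11 G (γ s) * (γ' s).1 + pd12 G (γ s) * (γ' s).2 = 0 ∧
      pd21 G (γ s) * (γ' s).1 + pd22 G (γ s) * (γ' s).2 = 0) :
    (∀ s ∈ Ioo α β, ∀ t ∈ Ioo α β,
      pd1 G (γ s) = pd1 G (γ t) ∧
      pd2 G (γ s) = pd2 G (γ t) ∧
      G (γ s) - pd1 G (γ s) * (γ s).1 - pd2 G (γ s) * (γ s).2 =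
        G (γ t) - pd1 G (γ t) * (γ t).1 - pd2 G (γ t) * (γ t).2) ∧
    (∃ p v : ℝ × ℝ, ∀ s ∈ Ioo α β, ∃ c : ℝ, γ s = p + c • v) := by
  have hne : (1 : WithTop ℕ∞) ≠ 0 := one_ne_zero
  have hGx : ∀ x ∈ Ω, ContDiffAt ℝ 2 G x := fun x hx => hG.contDiffAt (hΩ.mem_nhds hx)
  have hdG : ∀ x ∈ Ω, ContDiffAt ℝ 1 (fderiv ℝ G) x := fun x hx =>
    (hGx x hx).fderiv_right (by norm_num)
  have hp1 : ∀ x ∈ Ω, ContDiffAt ℝ 1 (pd1 G) x := fun x hx =>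
    (hdG x hx).clm_apply contDiffAt_const
  have hp2 : ∀ x ∈ Ω, ContDiffAt ℝ 1 (pd2 G) x := fun x hx =>
    (hdG x hx).clm_apply contDiffAt_const
  have happ : ∀ x ∈ Ω, ∀ u v : ℝ × ℝ,
      fderiv ℝ (fun y => fderiv ℝ G y u) x v = fderiv ℝ (fderiv ℝ G) x v u := by
    intro x hx u v
    have := ((hdG x hx).differentiableAt hne).hasFDerivAt.clm_apply (hasFDerivAt_const u x)
    rw [this.fderiv]
    simp
  have hsymm : ∀ x ∈ Ω, pd12 G x = pd21 G x := by
    intro x hx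
    have h1 : pd12 G x = fderiv ℝ (fderiv ℝ G) x (0, 1) (1, 0) := happ x hx _ _
    have h2 : pd21 G x = fderiv ℝ (fderiv ℝ G) x (1, 0) (0, 1) := happ x hx _ _
    rw [h1, h2]
    exact ((hGx x hx).isSymmSndFDerivAt (by simp)) _ _
  have hd1 : ∀ s ∈ Ioo α β, HasDerivAt (fun s => pd1 G (γ s)) 0 s := by
    intro s hs
    have := HasFDerivAt.comp_hasDerivAt (l := pd1 G) (f := γ) s
      ((hp1 _ (hγΩ s hs)).differentiableAt hne).hasFDerivAt (hγ' s hs)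
    rw [aux_pair] at this
    exact (hker s hs).1 ▸ this
  have hd2 : ∀ s ∈ Ioo α β, HasDerivAt (fun s => pd2 G (γ s)) 0 s := by
    intro s hs
    have := HasFDerivAt.comp_hasDerivAt (l := pd2 G) (f := γ) s
      ((hp2 _ (hγΩ s hs)).differentiableAt hne).hasFDerivAt (hγ' s hs)
    rw [aux_pair] at this
    exact (hker s hs).2 ▸ this
  have hc1 := aux_const_s5 α β _ hd1
  have hc2 := aux_const_s5 α β _ hd2
  have hγ1 : ∀ s ∈ Ioo α β, HasDerivAt (fun s => (γ s).1) (γ' s).1 s := fun s hs =>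
    HasFDerivAt.comp_hasDerivAt (l := Prod.fst) (f := γ) s hasFDerivAt_fst (hγ' s hs)
  have hγ2 : ∀ s ∈ Ioo α β, HasDerivAt (fun s => (γ s).2) (γ' s).2 s := fun s hs =>
    HasFDerivAt.comp_hasDerivAt (l := Prod.snd) (f := γ) s hasFDerivAt_snd (hγ' s hs)
  have hd3 : ∀ s ∈ Ioo α β, HasDerivAt
      (fun s => G (γ s) - pd1 G (γ s) * (γ s).1 - pd2 G (γ s) * (γ s).2) 0 s := by
    intro s hs
    have h0 := HasFDerivAt.comp_hasDerivAt (l := G) (f := γ) s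
      ((hGx _ (hγΩ s hs)).differentiableAt two_ne_zero).hasFDerivAt (hγ' s hs)
    rw [aux_pair] at h0
    have := (h0.sub ((hd1 s hs).mul (hγ1 s hs))).sub ((hd2 s hs).mul (hγ2 s hs))
    refine this.congr_deriv ?_
    simp only [pd1, pd2]
    ring
  have hc3 := aux_const_s5 α β _ hd3
  refine ⟨fun s hs t ht => ⟨hc1 s hs t ht, hc2 s hs t ht, hc3 s hs t ht⟩, ?_⟩
  -- local constancy of the normalised Hessian
  let A : ℝ → ℝ := fun s => pd11 G (γ s) / (pd11 G (γ s) + pd22 G (γ s))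
  let B : ℝ → ℝ := fun s => pd12 G (γ s) / (pd11 G (γ s) + pd22 G (γ s))
  have hloc : ∀ s ∈ Ioo α β, ∃ a b : ℝ, ∀ᶠ t in 𝓝 s, A t = a ∧ B t = b := by
    intro s hs
    have hIoo := isOpen_Ioo.mem_nhds hs
    have hΩn := hΩ.mem_nhds (hγΩ s hs)
    have hcont := (hγ' s hs).continuousAt
    rcases hnd _ (hγΩ s hs) with h0 | h0
    · have hopen : ∀ᶠ x in 𝓝 (γ s), pd11 G x ≠ 0 :=
        (((hp1 _ (hγΩ s hs)).fderiv_right (m := 0) (by norm_num)).continuousAt.clm_apply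
          continuousAt_const).eventually_ne h0
      obtain ⟨ψ, hψ⟩ := aux_L (pd1 G) (pd2 G) (ContinuousLinearMap.snd ℝ ℝ ℝ) (γ s)
        (hp1 _ (hγΩ s hs)) (hp2 _ (hγΩ s hs)) (by
          filter_upwards [hopen, hΩn] with x hx hxΩ
          refine ⟨pd12 G x / pd11 G x, aux_ext _ _ ?_ ?_⟩
          · change pd21 G x = pd12 G x / pd11 G x * pd11 G x
            rw [← hsymm x hxΩ]; field_simp
          · change pd22 G x = pd12 G x / pd11 G x * pd12 G x
            field_simp
            linarith [hMA x hxΩ]) (by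
          intro v h1 h2
          have h2' : v.2 = 0 := h2
          rw [aux_pair, h2', mul_zero, add_zero] at h1
          exact Prod.ext ((mul_eq_zero.1 h1).resolve_left h0) h2')
      refine ⟨1 / (1 + ψ (pd1 G (γ s)) ^ 2), ψ (pd1 G (γ s)) / (1 + ψ (pd1 G (γ s)) ^ 2), ?_⟩
      filter_upwards [hcont.eventually hψ, hcont.eventually hopen, hIoo] with t ht ht0 htI
      rw [hc1 t htI s hs] at ht
      set m := ψ (pd1 G (γ s))
      have e1 : pd21 G (γ t) = m * pd11 G (γ t) := congrArg (fun L => L (1, 0)) ht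
      have e2 : pd22 G (γ t) = m * pd12 G (γ t) := congrArg (fun L => L (0, 1)) ht
      have e3 := hsymm _ (hγΩ t htI)
      have hm : 1 + m ^ 2 ≠ 0 := by positivity
      have e4 : pd11 G (γ t) + pd22 G (γ t) = pd11 G (γ t) * (1 + m ^ 2) := by
        rw [e2, e3, e1]; ring
      simp only [A, B]
      rw [e4, e3, e1]
      constructor <;> field_simp
    · have hopen : ∀ᶠ x in 𝓝 (γ s), pd22 G x ≠ 0 :=
        (((hp2 _ (hγΩ s hs)).fderiv_right (m := 0) (by norm_num)).continuousAt.clm_apply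
          continuousAt_const).eventually_ne h0
      obtain ⟨ψ, hψ⟩ := aux_L (pd2 G) (pd1 G) (ContinuousLinearMap.fst ℝ ℝ ℝ) (γ s)
        (hp2 _ (hγΩ s hs)) (hp1 _ (hγΩ s hs)) (by
          filter_upwards [hopen, hΩn] with x hx hxΩ
          refine ⟨pd12 G x / pd22 G x, aux_ext _ _ ?_ ?_⟩
          · change pd11 G x = pd12 G x / pd22 G x * pd21 G x
            rw [← hsymm x hxΩ]; field_simp
            linarith [hMA x hxΩ]
          · change pd12 G x = pd12 G x / pd22 G x * pd22 G x
            field_simp) (by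
          intro v h1 h2
          have h2' : v.1 = 0 := h2
          rw [aux_pair, h2', mul_zero, zero_add] at h1
          exact Prod.ext h2' ((mul_eq_zero.1 h1).resolve_left h0))
      refine ⟨ψ (pd2 G (γ s)) ^ 2 / (1 + ψ (pd2 G (γ s)) ^ 2),
        ψ (pd2 G (γ s)) / (1 + ψ (pd2 G (γ s)) ^ 2), ?_⟩
      filter_upwards [hcont.eventually hψ, hcont.eventually hopen, hIoo] with t ht ht0 htI
      rw [hc2 t htI s hs] at ht
      set m := ψ (pd2 G (γ s))
      have e1 : pd11 G (γ t) = m * pd21 G (γ t) := congrArg (fun L => L (1, 0)) ht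
      have e2 : pd12 G (γ t) = m * pd22 G (γ t) := congrArg (fun L => L (0, 1)) ht
      have e3 := hsymm _ (hγΩ t htI)
      have hm : 1 + m ^ 2 ≠ 0 := by positivity
      have e4 : pd11 G (γ t) = m ^ 2 * pd22 G (γ t) := by
        rw [e1, ← e3, e2]; ring
      have e5 : m ^ 2 * pd22 G (γ t) + pd22 G (γ t) = pd22 G (γ t) * (1 + m ^ 2) := by ring
      simp only [A, B]
      rw [e4, e5, e2]
      constructor <;> field_simp
  have hcA := aux_const_s5 α β A (fun s hs => by
    obtain ⟨a, b, h⟩ := hloc s hs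
    exact (hasDerivAt_const s a).congr_of_eventuallyEq (h.mono fun t ht => ht.1))
  have hcB := aux_const_s5 α β B (fun s hs => by
    obtain ⟨a, b, h⟩ := hloc s hs
    exact (hasDerivAt_const s b).congr_of_eventuallyEq (h.mono fun t ht => ht.2))
  by_cases hemp : (Ioo α β).Nonempty
  swap
  · exact ⟨0, 0, fun s hs => (hemp ⟨s, hs⟩).elim⟩
  obtain ⟨s₀, hs₀⟩ := hemp
  have htr : ∀ s ∈ Ioo α β, pd11 G (γ s) + pd22 G (γ s) ≠ 0 := by
    intro s hs h
    have h1 := hMA _ (hγΩ s hs)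
    have h2 : pd22 G (γ s) = - pd11 G (γ s) := by linarith
    have h3 : pd11 G (γ s) = 0 := by
      rw [h2] at h1
      nlinarith [sq_nonneg (pd11 G (γ s)), sq_nonneg (pd12 G (γ s))]
    rcases hnd _ (hγΩ s hs) with h4 | h4
    · exact h4 h3
    · exact h4 (by rw [h2, h3, neg_zero])
  have hk1 : ∀ s ∈ Ioo α β, A s₀ * (γ' s).1 + B s₀ * (γ' s).2 = 0 := by
    intro s hs
    rw [hcA s₀ hs₀ s hs, hcB s₀ hs₀ s hs]
    have := htr s hs
    simp only [A, B]
    field_simp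
    linarith [(hker s hs).1]
  have hk2 : ∀ s ∈ Ioo α β, B s₀ * (γ' s).1 + (1 - A s₀) * (γ' s).2 = 0 := by
    intro s hs
    rw [hcA s₀ hs₀ s hs, hcB s₀ hs₀ s hs]
    have := htr s hs
    have h2 := (hker s hs).2
    rw [← hsymm _ (hγΩ s hs)] at h2
    simp only [A, B]
    field_simp
    linarith
  have key : ∀ a b : ℝ, (∀ s ∈ Ioo α β, a * (γ' s).1 + b * (γ' s).2 = 0) →
      ∀ s ∈ Ioo α β, a * (γ s).1 + b * (γ s).2 = a * (γ s₀).1 + b * (γ s₀).2 := by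
    intro a b hab s hs
    exact aux_const_s5 α β (fun s => a * (γ s).1 + b * (γ s).2) (fun t ht =>
      (((hγ1 t ht).const_mul a).add ((hγ2 t ht).const_mul b)).congr_deriv (hab t ht)) s hs s₀ hs₀
  by_cases hA : A s₀ = 0
  · exact aux_line α β _ _ γ (Or.inr (by rw [hA]; norm_num)) _ (key _ _ hk2)
  · exact aux_line α β _ _ γ (Or.inl hA) _ (key _ _ hk1)
end

section
/- Let ε > 0 and let φ be a measurable function on [l,r] with φ and φ² integrable. Define the curve γ(s) = (⟨φ⟩_{[l,s]}, ⟨φ²⟩_{[l,s]}) for s ∈ (l,r]. Assume γ(s) ∈ Ω_ε for all s ∈ (l,r], that there is a convex function g such that γ₂(s) = g(γ₁(s)) for all s ∈ (l,r], and that at some b ∈ (l,r] the function g is differentiable at γ₁(b) and the tangent line to the graph of g at γ(b) lies below the upper boundary of Ω_ε, i.e. γ₂(b) + g'(γ₁(b))·(t − γ₁(b)) ≤ t² + ε² for all t ∈ ℝ. Then for every a with l ≤ a < b, the Bellman point x^{[a,b]} = (⟨φ⟩_{[a,b]}, ⟨φ²⟩_{[a,b]}) belongs to Ω_ε. -/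
open MeasureTheory Set Real

theorem stmt6 (ε : ℝ) (hε : 0 < ε) (l r : ℝ) (hlr : l < r) (φ : ℝ → ℝ)
    (hmeas : Measurable φ)
    (h1 : IntegrableOn φ (Ioo l r))
    (h2 : IntegrableOn (fun t => (φ t) ^ 2) (Ioo l r))
    (hstrip : ∀ s ∈ Ioc l r,
      (intAvg φ l s, intAvg (fun t => (φ t) ^ 2) l s) ∈ parabStrip ε)
    (g : ℝ → ℝ) (hconv : ConvexOn ℝ univ g)
    (hgraph : ∀ s ∈ Ioc l r, intAvg (fun t => (φ t) ^ 2) l s = g (intAvg φ l s))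
    (b : ℝ) (hb : b ∈ Ioc l r) (g' : ℝ)
    (hdiff : HasDerivAt g g' (intAvg φ l b))
    (htangent : ∀ t : ℝ,
      intAvg (fun t => (φ t) ^ 2) l b + g' * (t - intAvg φ l b) ≤ t ^ 2 + ε ^ 2) :
    ∀ a : ℝ, l ≤ a → a < b →
      (intAvg φ a b, intAvg (fun t => (φ t) ^ 2) a b) ∈ parabStrip ε := by
  intro a hla hab
  obtain ⟨hlb, hbr⟩ := hb
  rcases hla.eq_or_lt with rfl | hla
  · exact hstrip b ⟨hlb, hbr⟩
  have key : ∀ f : ℝ → ℝ, IntegrableOn f (Ioo l r) → ∀ c d : ℝ, l ≤ c → c ≤ d → d ≤ r →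
      IntervalIntegrable f volume c d := by
    intro f hf c d h h' h''
    rw [intervalIntegrable_iff_integrableOn_Ioo_of_le h']
    exact hf.mono_set (Ioo_subset_Ioo h h'')
  have e1 := intervalIntegral.integral_add_adjacent_intervals
    (key _ h1 l a le_rfl hla.le (by linarith)) (key _ h1 a b hla.le hab.le hbr)
  have e2 := intervalIntegral.integral_add_adjacent_intervals
    (key _ h2 l a le_rfl hla.le (by linarith)) (key _ h2 a b hla.le hab.le hbr)
  have tang : ∀ u : ℝ, g (intAvg φ l b) + g' * (u - intAvg φ l b) ≤ g u := by
    intro u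
    rcases lt_trichotomy u (intAvg φ l b) with h | h | h
    · have := hconv.slope_le_of_hasDerivAt (mem_univ _) (mem_univ _) h hdiff
      rw [slope_def_field, div_le_iff₀ (by linarith)] at this
      linarith
    · simp [h]
    · have := hconv.le_slope_of_hasDerivAt (mem_univ _) (mem_univ _) h hdiff
      rw [slope_def_field, le_div_iff₀ (by linarith)] at this
      linarith
  have t1 := tang (intAvg φ l a)
  rw [← hgraph a ⟨hla, by linarith⟩, ← hgraph b ⟨hlb, hbr⟩] at t1
  have t2 := htangent (intAvg φ a b)
  have i1 := key _ h1 a b hla.le hab.le hbr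
  have i2 := key _ h2 a b hla.le hab.le hbr
  have cs : ∀ m : ℝ, 0 ≤ (∫ t in a..b, φ t ^ 2) - 2 * m * (∫ t in a..b, φ t) + m ^ 2 * (b - a) := by
    intro m
    have h0 : 0 ≤ ∫ t in a..b, (φ t - m) ^ 2 :=
      intervalIntegral.integral_nonneg hab.le (fun t _ => sq_nonneg _)
    have : (∫ t in a..b, (φ t - m) ^ 2) = ∫ t in a..b, (φ t ^ 2 - 2 * m * φ t + m ^ 2) := by
      congr 1; ext t; ring
    rw [this, intervalIntegral.integral_add (i2.sub (i1.const_mul _)) (by simp),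
      intervalIntegral.integral_sub i2 (i1.const_mul _), intervalIntegral.integral_const_mul,
      intervalIntegral.integral_const, smul_eq_mul] at h0
    linarith
  have m1 : ∀ f c d, c < d → (∫ t in c..d, f t) = intAvg f c d * (d - c) := by
    intro f c d h
    have : d - c ≠ 0 := (sub_pos.2 h).ne'
    unfold intAvg
    field_simp
  have hM : 0 < b - a := by linarith
  have hL : 0 < a - l := by linarith
  have c0 := cs (intAvg φ a b)
  rw [m1 _ _ _ hab, m1 _ _ _ hab] at c0
  rw [m1 _ _ _ hla, m1 _ _ _ hab, m1 _ _ _ hlb] at e1 e2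
  refine ⟨?_, ?_⟩
  · show intAvg φ a b ^ 2 ≤ intAvg (fun t => φ t ^ 2) a b
    have : 0 ≤ (intAvg (fun t => φ t ^ 2) a b - intAvg φ a b ^ 2) * (b - a) := by linarith
    linarith [nonneg_of_mul_nonneg_left this hM]
  · show intAvg (fun t => φ t ^ 2) a b ≤ intAvg φ a b ^ 2 + ε ^ 2
    refine le_trans ?_ t2
    have t3 := mul_le_mul_of_nonneg_right t1 hL.le
    refine le_of_mul_le_mul_right ?_ hM
    linear_combination t3 + e2 - g' * e1
end

section
/- Let ε > 0, let −∞ ≤ u₁ < u₂ ≤ +∞, let f : ℝ → ℝ be twice continuously differentiable, and let m : (u₁,u₂) → ℝ be twice differentiable and satisfy the ODE ε·m'(u) + m(u) = f'(u) on (u₁,u₂). Define Ω_R(u₁,u₂) = {x ∈ Ω_ε : u₁ < u_R(x) < u₂} and B^R(x) = m(u_R(x))·(x₁ − u_R(x)) + f(u_R(x)) on Ω_R(u₁,u₂). Then: (i) B^R(u, u²) = f(u) for all u ∈ (u₁,u₂); (ii) the gradient of B^R is constant along each tangent segment {x ∈ Ω_R(u₁,u₂) : u_R(x) = u}, so B^R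 solves the homogeneous Monge–Ampère equation B_{x₁x₁}B_{x₂x₂} − B_{x₁x₂}² = 0 on the interior of Ω_R(u₁,u₂); (iii) B^R is locally concave on Ω_R(u₁,u₂) if and only if m''(u) ≤ 0 for every u ∈ (u₁,u₂). -/
open Set Real

/-- The parameter of the right tangent through `x`. -/
noncomputable def uRpt (ε : ℝ) (x : ℝ × ℝ) : ℝ :=
  x.1 + ε - Real.sqrt (ε ^ 2 - (x.2 - x.1 ^ 2))

/-- The domain `Ω_R(u₁,u₂)` foliated by right tangents with parameters in `(u₁,u₂)`. -/
def OmegaR (ε : ℝ) (u₁ u₂ : EReal) : Set (ℝ × ℝ) :=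
  {x | x ∈ parabStrip ε ∧ u₁ < (uRpt ε x : EReal) ∧ (uRpt ε x : EReal) < u₂}

/-- The Bellman candidate `B^R` built from the coefficient `m`. -/
noncomputable def BRcand (ε : ℝ) (f m : ℝ → ℝ) (x : ℝ × ℝ) : ℝ :=
  m (uRpt ε x) * (x.1 - uRpt ε x) + f (uRpt ε x)

theorem uR_hasFDeriv (ε : ℝ) (x : ℝ × ℝ) (hx : x.2 < x.1 ^ 2 + ε ^ 2) :
    HasFDerivAt (uRpt ε)
      (((ε - uRpt ε x) / (x.1 - uRpt ε x + ε)) • ContinuousLinearMap.fst ℝ ℝ ℝ +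
        (1 / (2 * (x.1 - uRpt ε x + ε))) • ContinuousLinearMap.snd ℝ ℝ ℝ) x := by
  have hpos : 0 < ε ^ 2 - (x.2 - x.1 ^ 2) := by linarith
  have hs := Real.sqrt_pos.2 hpos
  have h1 : HasFDerivAt (fun y : ℝ × ℝ => y.1) (ContinuousLinearMap.fst ℝ ℝ ℝ) x := hasFDerivAt_fst
  have h2 : HasFDerivAt (fun y : ℝ × ℝ => y.2) (ContinuousLinearMap.snd ℝ ℝ ℝ) x := hasFDerivAt_snd
  have h3 := ((h2.sub (h1.pow 2)).const_sub (ε ^ 2)).sqrt hpos.ne'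
  have h4 := (h1.add_const ε).sub h3
  refine HasFDerivAt.congr_fderiv h4 ?_
  have e : x.1 - uRpt ε x + ε = √(ε ^ 2 - (x.2 - x.1 ^ 2)) := by unfold uRpt; ring
  rw [e]
  ext
  · simp [uRpt]
    field_simp
    ring
  · simp [uRpt]

theorem uR_quad (ε : ℝ) (x : ℝ × ℝ) (hx : x.2 ≤ x.1 ^ 2 + ε ^ 2) :
    (x.1 - uRpt ε x + ε) ^ 2 = ε ^ 2 - (x.2 - x.1 ^ 2) ∧ 0 ≤ x.1 - uRpt ε x + ε := by
  have hpos : 0 ≤ ε ^ 2 - (x.2 - x.1 ^ 2) := by linarith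
  have e : x.1 - uRpt ε x + ε = √(ε ^ 2 - (x.2 - x.1 ^ 2)) := by unfold uRpt; ring
  rw [e]
  exact ⟨Real.sq_sqrt hpos, Real.sqrt_nonneg _⟩

theorem BR_hasFDeriv (ε : ℝ) (f m : ℝ → ℝ) (hf : ContDiff ℝ 2 f) (a : ℝ) (x : ℝ × ℝ)
    (hx : x.2 < x.1 ^ 2 + ε ^ 2) (hm : HasDerivAt m a (uRpt ε x))
    (ho : ε * a + m (uRpt ε x) = deriv f (uRpt ε x)) :
    HasFDerivAt (BRcand ε f m)
      ((m (uRpt ε x) - (uRpt ε x - ε) * a) • ContinuousLinearMap.fst ℝ ℝ ℝ +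
        (a / 2) • ContinuousLinearMap.snd ℝ ℝ ℝ) x := by
  have hu := uR_hasFDeriv ε x hx
  have h1 : HasFDerivAt (fun y : ℝ × ℝ => y.1) (ContinuousLinearMap.fst ℝ ℝ ℝ) x := hasFDerivAt_fst
  have hfd : HasDerivAt f (deriv f (uRpt ε x)) (uRpt ε x) :=
    (hf.differentiable (by norm_num) _).hasDerivAt
  have h := ((hm.comp_hasFDerivAt x hu).mul (h1.sub hu)).add (hfd.comp_hasFDerivAt x hu)
  refine HasFDerivAt.congr_fderiv h ?_
  obtain ⟨hq, hs⟩ := uR_quad ε x hx.le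
  have hs' : x.1 - uRpt ε x + ε ≠ 0 := by
    intro h0
    rw [h0] at hq
    nlinarith
  rw [← ho]
  simp only [Function.comp, Pi.sub_apply]
  generalize uRpt ε x = u at *
  ext
  · simp
    field_simp
    ring
  · simp
    field_simp
    ring

theorem interior_lt (ε : ℝ) (u₁ u₂ : EReal) (x : ℝ × ℝ) (hx : x ∈ interior (OmegaR ε u₁ u₂)) :
    x.2 < x.1 ^ 2 + ε ^ 2 := by
  have h1 : OmegaR ε u₁ u₂ ∈ nhds x := mem_interior_iff_mem_nhds.1 hx
  have hc : Filter.Tendsto (fun t : ℝ => ((x.1, x.2 + t) : ℝ × ℝ)) (nhds 0) (nhds x) := by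
    have : Continuous (fun t : ℝ => ((x.1, x.2 + t) : ℝ × ℝ)) := by fun_prop
    simpa using this.tendsto 0
  obtain ⟨δ, hδ, h⟩ := Metric.eventually_nhds_iff.1 (hc h1)
  have := @h (δ / 2) (by simp [abs_of_pos hδ]; linarith)
  have := this.1.2
  simp at this
  linarith

theorem interior_uR (ε : ℝ) (u₁ u₂ : EReal) (x : ℝ × ℝ) (hx : x ∈ interior (OmegaR ε u₁ u₂)) :
    u₁ < (uRpt ε x : EReal) ∧ (uRpt ε x : EReal) < u₂ := (interior_subset hx).2

/-- The affine majorant. -/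
noncomputable def Lpl (ε : ℝ) (f m m' : ℝ → ℝ) (x : ℝ × ℝ) (v : ℝ) : ℝ :=
  m v * (x.1 - v) + f v + m' v / 2 * (x.2 - 2 * (v - ε) * x.1 + v ^ 2 - 2 * v * ε)

theorem Lpl_deriv (ε : ℝ) (f m m' : ℝ → ℝ) (hf : ContDiff ℝ 2 f) (x : ℝ × ℝ) (v b : ℝ)
    (hm : HasDerivAt m (m' v) v) (hm' : HasDerivAt m' b v) (ho : ε * m' v + m v = deriv f v) :
    HasDerivAt (Lpl ε f m m' x) (b / 2 * (x.2 - 2 * (v - ε) * x.1 + v ^ 2 - 2 * v * ε)) v := by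
  have hfd : HasDerivAt f (deriv f v) v := (hf.differentiable (by norm_num) _).hasDerivAt
  have hi := hasDerivAt_id v
  have h := ((hm.mul (hi.const_sub x.1)).add hfd).add ((hm'.div_const 2).mul
    ((((((hi.sub_const ε).const_mul 2).mul_const x.1).const_sub x.2).add (hi.pow 2)).sub
      ((hi.const_mul 2).mul_const ε)))
  refine HasDerivAt.congr_deriv h ?_
  rw [← ho]
  simp
  ring

theorem Lpl_self (ε : ℝ) (f m m' : ℝ → ℝ) (x : ℝ × ℝ) (hx : x.2 ≤ x.1 ^ 2 + ε ^ 2) :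
    Lpl ε f m m' x (uRpt ε x) = BRcand ε f m x := by
  obtain ⟨hq, hs⟩ := uR_quad ε x hx
  unfold Lpl BRcand
  linear_combination (m' (uRpt ε x) / 2) * hq

theorem Lpl_ge (ε : ℝ) (u₁ u₂ : EReal) (f m m' m'' : ℝ → ℝ) (hf : ContDiff ℝ 2 f)
    (hm : ∀ u : ℝ, u₁ < (u : EReal) → (u : EReal) < u₂ →
      HasDerivAt m (m' u) u ∧ HasDerivAt m' (m'' u) u ∧
      ε * m' u + m u = deriv f u)
    (hneg : ∀ u : ℝ, u₁ < (u : EReal) → (u : EReal) < u₂ → m'' u ≤ 0)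
    (x : ℝ × ℝ) (hx : x ∈ OmegaR ε u₁ u₂) (v : ℝ) (hv1 : u₁ < (v : EReal)) (hv2 : (v : EReal) < u₂)
    (hv : v ≤ x.1 + ε + (x.1 - uRpt ε x + ε)) : BRcand ε f m x ≤ Lpl ε f m m' x v := by
  obtain ⟨⟨-, hx2⟩, hu1, hu2⟩ := hx
  rw [← Lpl_self ε f m m' x hx2]
  obtain ⟨hq, hs⟩ := uR_quad ε x hx2
  have hd : ∀ w : ℝ, u₁ < (w : EReal) → (w : EReal) < u₂ → HasDerivAt (Lpl ε f m m' x) (m'' w / 2 *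
      (x.2 - 2 * (w - ε) * x.1 + w ^ 2 - 2 * w * ε)) w := fun w h1 h2 =>
    Lpl_deriv ε f m m' hf x w (m'' w) (hm w h1 h2).1 (hm w h1 h2).2.1 (hm w h1 h2).2.2
  have hfac : ∀ w : ℝ, x.2 - 2 * (w - ε) * x.1 + w ^ 2 - 2 * w * ε =
      (w - uRpt ε x) * (w - (x.1 + ε + (x.1 - uRpt ε x + ε))) := by
    intro w
    linear_combination hq
  rcases le_total v (uRpt ε x) with h | h
  · have hI : ∀ w ∈ Icc v (uRpt ε x), u₁ < (w : EReal) ∧ (w : EReal) < u₂ := fun w hw =>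
      ⟨hv1.trans_le (by exact_mod_cast hw.1), lt_of_le_of_lt (by exact_mod_cast hw.2) hu2⟩
    have := antitoneOn_of_deriv_nonpos (convex_Icc v (uRpt ε x))
      (f := Lpl ε f m m' x)
      (fun w hw => (hd w (hI w hw).1 (hI w hw).2).continuousAt.continuousWithinAt)
      (fun w hw => by
        have hw' := hI w (interior_subset hw)
        exact (hd w hw'.1 hw'.2).differentiableAt.differentiableWithinAt)
      (fun w hw => by
        have hw' := interior_subset hw
        have hw2 := hI w hw'
        rw [(hd w hw2.1 hw2.2).deriv, hfac]
        refine mul_nonpos_of_nonpos_of_nonneg (by linarith [hneg w hw2.1 hw2.2]) ?_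
        exact mul_nonneg_of_nonpos_of_nonpos (by linarith [hw'.2]) (by linarith [hw'.2]))
    exact this (left_mem_Icc.2 h) (right_mem_Icc.2 h) h
  · have hI : ∀ w ∈ Icc (uRpt ε x) v, u₁ < (w : EReal) ∧ (w : EReal) < u₂ := fun w hw =>
      ⟨hu1.trans_le (by exact_mod_cast hw.1), lt_of_le_of_lt (by exact_mod_cast hw.2) hv2⟩
    have := monotoneOn_of_deriv_nonneg (convex_Icc (uRpt ε x) v)
      (f := Lpl ε f m m' x)
      (fun w hw => (hd w (hI w hw).1 (hI w hw).2).continuousAt.continuousWithinAt)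
      (fun w hw => by
        have hw' := hI w (interior_subset hw)
        exact (hd w hw'.1 hw'.2).differentiableAt.differentiableWithinAt)
      (fun w hw => by
        have hw' := interior_subset hw
        have hw2 := hI w hw'
        rw [(hd w hw2.1 hw2.2).deriv, hfac]
        refine mul_nonneg_of_nonpos_of_nonpos (by linarith [hneg w hw2.1 hw2.2]) ?_
        exact mul_nonpos_of_nonneg_of_nonpos (by linarith [hw'.1]) (by linarith [hw'.2]))
    exact this (left_mem_Icc.2 h) (right_mem_Icc.2 h) h

theorem geom (ε : ℝ) (x z : ℝ × ℝ) (hseg : segment ℝ x z ⊆ parabStrip ε) :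
    uRpt ε z ≤ x.1 + ε + (x.1 - uRpt ε x + ε) := by
  by_contra! hlt
  have hx := hseg (left_mem_segment ℝ x z)
  have hz := hseg (right_mem_segment ℝ x z)
  obtain ⟨hqx, hsx⟩ := uR_quad ε x hx.2
  obtain ⟨hqz, hsz⟩ := uR_quad ε z hz.2
  set v := uRpt ε z with hv
  set s := x.1 - uRpt ε x + ε with hs
  have ha : s < v - ε - x.1 := by linarith
  have hline : ∀ t : ℝ, 0 ≤ t → t ≤ 1 →
      0 ≤ (-(1 - t) * (v - ε - x.1) + t * (z.1 - v + ε)) ^ 2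
        - (1 - t) * ((v - ε - x.1) ^ 2 - s ^ 2) := by
    intro t h0 h1
    have := (hseg (show (1 - t) • x + t • z ∈ segment ℝ x z from
      ⟨1 - t, t, by linarith, h0, by ring, rfl⟩)).2
    simp only [Prod.fst_add, Prod.snd_add, Prod.smul_fst, Prod.smul_snd, smul_eq_mul] at this
    have key : (-(1 - t) * (v - ε - x.1) + t * (z.1 - v + ε)) ^ 2
        - (1 - t) * ((v - ε - x.1) ^ 2 - s ^ 2) =
        ((1 - t) * x.1 + t * z.1) ^ 2 + ε ^ 2 - ((1 - t) * x.2 + t * z.2) := by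
      linear_combination (1 - t) * hqx + t * hqz
    linarith
  set a := v - ε - x.1
  set b := z.1 - v + ε
  have hapos : 0 < a := by linarith
  have hq : 0 < a ^ 2 - s ^ 2 := by nlinarith
  rcases hsz.eq_or_lt with hb | hb
  · have ha2 : 0 < 2 * a ^ 2 := by positivity
    have hr1 : (a ^ 2 - s ^ 2) / (2 * a ^ 2) ≤ 1 := by
      rw [div_le_one ha2]; nlinarith
    have hr0 : 0 < (a ^ 2 - s ^ 2) / (2 * a ^ 2) := by positivity
    have := hline (1 - (a ^ 2 - s ^ 2) / (2 * a ^ 2)) (by linarith) (by linarith)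
    rw [← hb] at this
    have e : (a ^ 2 - s ^ 2) / (2 * a ^ 2) * (2 * a ^ 2) = a ^ 2 - s ^ 2 := by field_simp
    set r := (a ^ 2 - s ^ 2) / (2 * a ^ 2)
    rw [← e] at this
    have : 0 < r * (r * a ^ 2) := by positivity
    nlinarith
  · have := hline (a / (a + b)) (by positivity) (by rw [div_le_one (by positivity)]; linarith)
    have e1 : 1 - a / (a + b) = b / (a + b) := by field_simp; ring
    rw [e1] at this
    have e2 : -(b / (a + b)) * a + a / (a + b) * b = 0 := by ring
    rw [e2] at this
    have : 0 < b / (a + b) * (a ^ 2 - s ^ 2) := by positivity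
    nlinarith

theorem fwd (ε : ℝ) (hε : 0 < ε) (u₁ u₂ : EReal) (f m m' m'' : ℝ → ℝ) (hf : ContDiff ℝ 2 f)
    (hm : ∀ u : ℝ, u₁ < (u : EReal) → (u : EReal) < u₂ →
      HasDerivAt m (m' u) u ∧ HasDerivAt m' (m'' u) u ∧
      ε * m' u + m u = deriv f u)
    (hc : LocallyConcaveOn (OmegaR ε u₁ u₂) (BRcand ε f m))
    (u : ℝ) (h1 : u₁ < (u : EReal)) (h2 : (u : EReal) < u₂) : m'' u ≤ 0 := by
  have hopen : IsOpen {v : ℝ | u₁ < (v : EReal) ∧ (v : EReal) < u₂} :=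
    (isOpen_Ioo (a := u₁) (b := u₂)).preimage continuous_coe_real_ereal
  obtain ⟨δ', hδ', hball⟩ := Metric.isOpen_iff.1 hopen u ⟨h1, h2⟩
  obtain ⟨δ, hδ, hδ1, hδ2⟩ : ∃ δ, 0 < δ ∧ δ ≤ δ' ∧ δ ≤ ε / 2 :=
    ⟨min δ' (ε / 2), by positivity, min_le_left _ _, min_le_right _ _⟩
  have hI : ∀ v ∈ Ioo (u - δ) (u + δ), u₁ < (v : EReal) ∧ (v : EReal) < u₂ := by
    intro v hv
    apply hball
    rw [Metric.mem_ball, Real.dist_eq, abs_lt]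
    constructor <;> linarith [hv.1, hv.2]
  set c := u - ε / 2 with hcdef
  set S := Ioo (c ^ 2 + ε ^ 2 - (ε / 2 + δ) ^ 2) (c ^ 2 + ε ^ 2 - (ε / 2 - δ) ^ 2) with hS
  have hmem : ∀ y ∈ S, uRpt ε (c, y) ∈ Ioo (u - δ) (u + δ) ∧ y < c ^ 2 + ε ^ 2 ∧ c ^ 2 ≤ y := by
    intro y hy
    have hb1 : y < c ^ 2 + ε ^ 2 := by nlinarith [hy.2, sq_nonneg (ε / 2 - δ)]
    have hb2 : c ^ 2 ≤ y := by nlinarith [hy.1]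
    obtain ⟨hq, hs⟩ := uR_quad ε (c, y) hb1.le
    simp only at hq hs
    refine ⟨⟨?_, ?_⟩, hb1, hb2⟩
    · have : c - uRpt ε (c, y) + ε < ε / 2 + δ := by
        apply lt_of_pow_lt_pow_left₀ 2 (by linarith)
        linarith [hy.1]
      linarith
    · have : ε / 2 - δ < c - uRpt ε (c, y) + ε := by
        apply lt_of_pow_lt_pow_left₀ 2 hs
        linarith [hy.2]
      linarith
  have hOm : ∀ y ∈ S, (c, y) ∈ OmegaR ε u₁ u₂ := fun y hy =>
    ⟨⟨(hmem y hy).2.2, (hmem y hy).2.1.le⟩, hI _ (hmem y hy).1⟩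
  have hconc : ConcaveOn ℝ S (fun y => BRcand ε f m (c, y)) := by
    refine ⟨convex_Ioo _ _, ?_⟩
    intro y hy z hz α β hα hβ hαβ
    have hcomb : ∀ α β : ℝ, α + β = 1 →
        α • ((c, y) : ℝ × ℝ) + β • ((c, z) : ℝ × ℝ) = (c, α • y + β • z) := by
      intro α β h
      ext
      · simp; rw [← add_mul, h, one_mul]
      · simp
    have := hc (c, y) (c, z) (hOm y hy) (hOm z hz) (by
      rintro p ⟨α, β, h0, h1, h2, rfl⟩
      rw [hcomb α β h2]
      exact hOm _ (convex_Ioo _ _ hy hz h0 h1 h2)) α β hα hβ hαβ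
    rw [hcomb α β hαβ] at this
    simpa using this
  have hder : ∀ y ∈ S, HasDerivAt (fun y => BRcand ε f m (c, y)) (m' (uRpt ε (c, y)) / 2) y := by
    intro y hy
    have hu := hI _ (hmem y hy).1
    have hB := BR_hasFDeriv ε f m hf _ (c, y) (hmem y hy).2.1 (hm _ hu.1 hu.2).1 (hm _ hu.1 hu.2).2.2
    have hp : HasDerivAt (fun y : ℝ => ((c, y) : ℝ × ℝ)) (0, 1) y :=
      (hasDerivAt_const y c).prodMk (hasDerivAt_id y)
    have := hB.comp_hasDerivAt y hp
    refine HasDerivAt.congr_deriv this ?_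
    simp
  have hanti := hconc.antitoneOn_deriv (fun y hy => (hder y hy).differentiableAt)
  have hY : ∀ v ∈ Ioo (u - δ) (u + δ), c ^ 2 + ε ^ 2 - (c + ε - v) ^ 2 ∈ S ∧
      uRpt ε (c, c ^ 2 + ε ^ 2 - (c + ε - v) ^ 2) = v := by
    intro v hv
    have hp : 0 < c + ε - v := by linarith [hv.2]
    refine ⟨⟨?_, ?_⟩, ?_⟩
    · have : (c + ε - v) ^ 2 < (ε / 2 + δ) ^ 2 :=
        pow_lt_pow_left₀ (by linarith [hv.1]) hp.le (by norm_num)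
      linarith
    · have : (ε / 2 - δ) ^ 2 < (c + ε - v) ^ 2 :=
        pow_lt_pow_left₀ (by linarith [hv.2]) (by linarith) (by norm_num)
      linarith
    · unfold uRpt
      simp only
      rw [show ε ^ 2 - (c ^ 2 + ε ^ 2 - (c + ε - v) ^ 2 - c ^ 2) = (c + ε - v) ^ 2 by ring,
        Real.sqrt_sq hp.le]
      ring
  have hm'anti : AntitoneOn m' (Ioo (u - δ) (u + δ)) := by
    intro v hv w hw hvw
    obtain ⟨hv1, hv2⟩ := hY v hv
    obtain ⟨hw1, hw2⟩ := hY w hw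
    have := hanti hv1 hw1 (by
      have : (c + ε - w) ^ 2 ≤ (c + ε - v) ^ 2 :=
        pow_le_pow_left₀ (by linarith [hw.2]) (by linarith) 2
      linarith)
    rw [(hder _ hv1).deriv, (hder _ hw1).deriv, hv2, hw2] at this
    linarith
  have humem : u ∈ Ioo (u - δ) (u + δ) := ⟨by linarith, by linarith⟩
  have := hm'anti.derivWithin_nonpos (x := u)
  rwa [derivWithin_of_isOpen isOpen_Ioo humem, (hm u h1 h2).2.1.deriv] at this

theorem stmt7 (ε : ℝ) (hε : 0 < ε) (u₁ u₂ : EReal) (hu : u₁ < u₂)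
    (f : ℝ → ℝ) (hf : ContDiff ℝ 2 f)
    (m m' m'' : ℝ → ℝ)
    (hm : ∀ u : ℝ, u₁ < (u : EReal) → (u : EReal) < u₂ →
      HasDerivAt m (m' u) u ∧ HasDerivAt m' (m'' u) u ∧
      ε * m' u + m u = deriv f u) :
    (∀ u : ℝ, u₁ < (u : EReal) → (u : EReal) < u₂ →
      BRcand ε f m (u, u ^ 2) = f u) ∧
    ((∀ x ∈ interior (OmegaR ε u₁ u₂), ∀ y ∈ interior (OmegaR ε u₁ u₂),
        uRpt ε x = uRpt ε y →
        fderiv ℝ (BRcand ε f m) x = fderiv ℝ (BRcand ε f m) y) ∧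
      (∀ x ∈ interior (OmegaR ε u₁ u₂),
        pd11 (BRcand ε f m) x * pd22 (BRcand ε f m) x -
          (pd12 (BRcand ε f m) x) ^ 2 = 0)) ∧
    (LocallyConcaveOn (OmegaR ε u₁ u₂) (BRcand ε f m) ↔
      ∀ u : ℝ, u₁ < (u : EReal) → (u : EReal) < u₂ → m'' u ≤ 0) := by
  have hB : ∀ x ∈ interior (OmegaR ε u₁ u₂), fderiv ℝ (BRcand ε f m) x =
      (m (uRpt ε x) - (uRpt ε x - ε) * m' (uRpt ε x)) • ContinuousLinearMap.fst ℝ ℝ ℝ +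
        (m' (uRpt ε x) / 2) • ContinuousLinearMap.snd ℝ ℝ ℝ := by
    intro x hx
    obtain ⟨h1, h2⟩ := interior_uR ε u₁ u₂ x hx
    exact (BR_hasFDeriv ε f m hf _ x (interior_lt ε u₁ u₂ x hx) (hm _ h1 h2).1
      (hm _ h1 h2).2.2).fderiv
  refine ⟨?_, ⟨?_, ?_⟩, ⟨?_, ?_⟩⟩
  · intro u _ _
    have : uRpt ε (u, u ^ 2) = u := by simp [uRpt, Real.sqrt_sq hε.le]
    simp [BRcand, this]
  · intro x hx y hy hxy
    rw [hB x hx, hB y hy, hxy]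
  · intro x hx
    have hlt := interior_lt ε u₁ u₂ x hx
    obtain ⟨h1, h2⟩ := interior_uR ε u₁ u₂ x hx
    obtain ⟨hma, hmb, -⟩ := hm _ h1 h2
    have hu := uR_hasFDeriv ε x hlt
    have hev : ∀ᶠ y in nhds x, y ∈ interior (OmegaR ε u₁ u₂) := isOpen_interior.mem_nhds hx
    have e1 : pd1 (BRcand ε f m) =ᶠ[nhds x]
        (fun v => m v - (v - ε) * m' v) ∘ uRpt ε := by
      filter_upwards [hev] with y hy
      simp [pd1, hB y hy]
    have e2 : pd2 (BRcand ε f m) =ᶠ[nhds x] (fun v => m' v / 2) ∘ uRpt ε := by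
      filter_upwards [hev] with y hy
      simp [pd2, hB y hy]
    have d1 := (hma.sub (((hasDerivAt_id (uRpt ε x)).sub_const ε).mul hmb)).comp_hasFDerivAt x hu
    have d2 := (hmb.div_const 2).comp_hasFDerivAt x hu
    have f1 := (HasFDerivAt.congr_of_eventuallyEq d1 e1).fderiv
    have f2 := (HasFDerivAt.congr_of_eventuallyEq d2 e2).fderiv
    rw [pd11, pd12, pd22, f1, f2]
    simp
    ring
  · intro hc u h1 h2
    exact fwd ε hε u₁ u₂ f m m' m'' hf hm hc u h1 h2
  · intro hneg x y hx hy hseg α β hα hβ hαβ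
    set z := α • x + β • y with hzdef
    have hzs : z ∈ segment ℝ x y := ⟨α, β, hα, hβ, hαβ, rfl⟩
    have hz := hseg hzs
    have hsx : segment ℝ x z ⊆ parabStrip ε := fun p hp =>
      (hseg ((convex_segment x y).segment_subset (left_mem_segment ℝ x y) hzs hp)).1
    have hsy : segment ℝ y z ⊆ parabStrip ε := fun p hp =>
      (hseg ((convex_segment x y).segment_subset (right_mem_segment ℝ x y) hzs hp)).1
    have hx' := Lpl_ge ε u₁ u₂ f m m' m'' hf hm hneg x hx _ hz.2.1 hz.2.2 (geom ε x z hsx)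
    have hy' := Lpl_ge ε u₁ u₂ f m m' m'' hf hm hneg y hy _ hz.2.1 hz.2.2 (geom ε y z hsy)
    rw [← Lpl_self ε f m m' z hz.1.2]
    have haff : Lpl ε f m m' z (uRpt ε z) =
        α * Lpl ε f m m' x (uRpt ε z) + β * Lpl ε f m m' y (uRpt ε z) := by
      generalize uRpt ε z = v
      have hz1 : z.1 = α * x.1 + β * y.1 := by simp [hzdef]
      have hz2 : z.2 = α * x.2 + β * y.2 := by simp [hzdef]
      unfold Lpl
      rw [hz1, hz2]
      have hb : β = 1 - α := by linarith
      rw [hb]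
      ring
    rw [haff]
    exact add_le_add (mul_le_mul_of_nonneg_left hx' hα) (mul_le_mul_of_nonneg_left hy' hβ)
end

section
/- Let 0 < ε < ε₀, f ∈ 𝔚_{ε₀}, and u₂ ∈ ℝ. For A ∈ ℝ define m_A(u) = e^{−u/ε}·(A + ε⁻¹∫_{−∞}^u f'(t)e^{t/ε}dt) for u < u₂ (these are exactly the solutions of ε·m' + m = f' on (−∞,u₂)). Then: (i) m_A is twice differentiable with m_A''(u) = ε⁻¹e^{−u/ε}·(ε⁻¹A + ∫_{−∞}^u f'''(t)e^{t/ε}dt); (ii) if m_A''(u) ≤ 0 for all u < u₂, then A ≤ 0; (iii) for every A ≤ 0 and every x ∈ Ω_ε with u_R(x) < u₂, writing u = u_R(x), one has m_A(u)·(x₁ − u) + f(u) ≥ m_0(u)·(x₁ − u) + f(u); that is, among the candidate functions corresponding to A ≤ 0, the choice A = 0 gives the pointwise minimal one. -/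
open MeasureTheory Set Real

/-- The general solution `m_A` of `ε·m' + m = f'` on `(−∞, u₂)`. -/
noncomputable def mAsol (ε : ℝ) (f : ℝ → ℝ) (A u : ℝ) : ℝ :=
  Real.exp (-u / ε) * (A + ε⁻¹ * ∫ t in Iic u, deriv f t * Real.exp (t / ε))

/-- The second derivative of `m_A`. -/
noncomputable def mAsol'' (ε : ℝ) (f3 : ℝ → ℝ) (A u : ℝ) : ℝ :=
  ε⁻¹ * Real.exp (-u / ε) * (ε⁻¹ * A + ∫ t in Iic u, f3 t * Real.exp (t / ε))

lemma aux_integrable {ε ε₀ : ℝ} (hε : 0 < ε) (h : ε < ε₀) {g : ℝ → ℝ}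
    (hg : Integrable (fun t => g t * Real.exp (-|t| / ε₀))) (u : ℝ) :
    IntegrableOn (fun t => g t * Real.exp (t / ε)) (Iic u) := by
  have h0 : 0 < ε₀ := hε.trans h
  have h1 : IntegrableOn (fun t => (g t * Real.exp (-|t| / ε₀)) *
      Real.exp (t / ε + |t| / ε₀)) (Iic u) := by
    refine Integrable.mul_bdd (c := Real.exp (2 * |u| / ε)) hg.integrableOn ?_ ?_
    · exact (by fun_prop : Continuous fun t : ℝ => Real.exp (t / ε + |t| / ε₀)).aestronglyMeasurable
    · refine (ae_restrict_iff' measurableSet_Iic).2 (Filter.Eventually.of_forall fun t ht => ?_)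
      rw [Real.norm_eq_abs, abs_of_pos (Real.exp_pos _)]
      apply Real.exp_le_exp.2
      have hle : |t| / ε₀ ≤ |t| / ε := by gcongr
      have h2 : t / ε + |t| / ε ≤ 2 * |u| / ε := by
        rw [← add_div]
        gcongr
        rcases le_total t 0 with h | h
        · rw [abs_of_nonpos h]; linarith [abs_nonneg u]
        · rw [abs_of_nonneg h]; linarith [le_abs_self u, show t ≤ u from ht]
      linarith
  refine h1.congr_fun (fun t _ => ?_) measurableSet_Iic
  simp only
  rw [mul_assoc, ← Real.exp_add]
  congr 2
  ring

lemma aux_ibp {ε : ℝ} {g g3 : ℝ → ℝ}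
    (hg : ∀ x y : ℝ, x ≤ y → g y - g x = ∫ t in x..y, g3 t) (u : ℝ)
    (i1 : IntegrableOn (fun t => g t * Real.exp (t / ε)) (Iic u))
    (i3 : IntegrableOn (fun t => g3 t * Real.exp (t / ε)) (Iic u)) :
    ∫ t in Iic u, g3 t * Real.exp (t / ε) =
      g u * Real.exp (u / ε) - ε⁻¹ * ∫ t in Iic u, g t * Real.exp (t / ε) := by
  have ii1 : ∀ a ≤ u, IntervalIntegrable (fun t => g t * Real.exp (t / ε)) volume a u :=
    fun a ha => (intervalIntegrable_iff_integrableOn_Ioc_of_le ha).2 (i1.mono_set Ioc_subset_Iic_self)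
  have ii3 : ∀ a ≤ u, IntervalIntegrable (fun t => g3 t * Real.exp (t / ε)) volume a u :=
    fun a ha => (intervalIntegrable_iff_integrableOn_Ioc_of_le ha).2 (i3.mono_set Ioc_subset_Iic_self)
  have dexp : ∀ x, HasDerivAt (fun t => Real.exp (t / ε)) (Real.exp (x / ε) * ε⁻¹) x := by
    intro x
    simpa [div_eq_mul_inv] using ((hasDerivAt_id x).div_const ε).exp
  have key : ∀ a ≤ u, ∫ t in a..u, g3 t * Real.exp (t / ε) =
      g u * Real.exp (u / ε) - g a * Real.exp (a / ε)
        - ε⁻¹ * ∫ t in a..u, g t * Real.exp (t / ε) := by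
    intro a ha
    have l3 : IntervalIntegrable g3 volume a u := by
      have := (ii3 a ha).mul_continuousOn (g := fun t => Real.exp (-(t / ε))) (by fun_prop)
      refine this.congr (fun t _ => ?_)
      rw [mul_assoc, ← Real.exp_add]; simp
    have ac1 : AbsolutelyContinuousOnInterval (fun x => ∫ t in a..x, g3 t) a u :=
      l3.absolutelyContinuousOnInterval_intervalIntegral left_mem_uIcc
    have ac2 : AbsolutelyContinuousOnInterval (fun x => Real.exp (x / ε)) a u :=
      ContDiffOn.absolutelyContinuousOnInterval (by fun_prop)
    have P := ac1.integral_mul_deriv_eq_deriv_mul ac2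
    have P2 : ∫ x in a..u, deriv (fun x => ∫ t in a..x, g3 t) x * Real.exp (x / ε) =
        ∫ x in a..u, g3 x * Real.exp (x / ε) := by
      apply intervalIntegral.integral_congr_ae
      filter_upwards [l3.ae_hasDerivAt_integral] with x hx hx2
      rw [(hx (uIoc_subset_uIcc hx2) a left_mem_uIcc).deriv]
    have P3 : ∫ x in a..u, (∫ t in a..x, g3 t) * deriv (fun x => Real.exp (x / ε)) x =
        ∫ x in a..u, (ε⁻¹ * (g x * Real.exp (x / ε)) - g a * (Real.exp (x / ε) * ε⁻¹)) := by
      apply intervalIntegral.integral_congr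
      intro x hx
      rw [uIcc_of_le ha] at hx
      simp only
      rw [(dexp x).deriv, ← hg a x hx.1]
      ring
    have P4 : ∫ x in a..u, Real.exp (x / ε) * ε⁻¹ = Real.exp (u / ε) - Real.exp (a / ε) :=
      intervalIntegral.integral_eq_sub_of_hasDerivAt (fun x _ => dexp x)
        (Continuous.intervalIntegrable (by fun_prop) _ _)
    rw [P2, P3, intervalIntegral.integral_sub ((ii1 a ha).const_mul _)
      (Continuous.intervalIntegrable (by fun_prop) _ _),
      intervalIntegral.integral_const_mul, intervalIntegral.integral_const_mul, P4,
      ← hg a u ha, intervalIntegral.integral_same] at P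
    linarith
  have T1 := intervalIntegral_tendsto_integral_Iic u i1 Filter.tendsto_id
  have T3 := intervalIntegral_tendsto_integral_Iic u i3 Filter.tendsto_id
  have T : Filter.Tendsto (fun a => g a * Real.exp (a / ε)) Filter.atBot
      (nhds (g u * Real.exp (u / ε) - ε⁻¹ * (∫ t in Iic u, g t * Real.exp (t / ε))
        - ∫ t in Iic u, g3 t * Real.exp (t / ε))) := by
    refine ((T1.const_mul ε⁻¹).const_sub (g u * Real.exp (u / ε)) |>.sub T3).congr' ?_
    filter_upwards [Filter.eventually_le_atBot u] with a ha
    simp only [id]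
    rw [key a ha]; ring
  have B := IntegrableAtFilter.eq_zero_of_tendsto
    (⟨Iic u, Filter.Iic_mem_atBot _, i1⟩ :
      IntegrableAtFilter (fun a => g a * Real.exp (a / ε)) Filter.atBot volume) (by
      intro s hs
      rcases Filter.mem_atBot_sets.1 hs with ⟨b, hb⟩
      apply le_antisymm (le_top)
      rw [← volume_Iic (a := b)]
      exact measure_mono hb) T
  linarith

lemma aux_deriv {h : ℝ → ℝ} (hc : Continuous h) (hi : ∀ u, IntegrableOn h (Iic u)) (u : ℝ) :
    HasDerivAt (fun u => ∫ t in Iic u, h t) (h u) u := by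
  have e : (fun u => ∫ t in Iic u, h t) = fun u => (∫ t in Iic (0:ℝ), h t) + ∫ t in (0:ℝ)..u, h t := by
    funext v
    rw [← intervalIntegral.integral_Iic_sub_Iic (hi 0) (hi v)]; ring
  rw [e]
  exact (intervalIntegral.integral_hasDerivAt_right (hc.intervalIntegrable _ _)
    (hc.stronglyMeasurableAtFilter _ _) hc.continuousAt).const_add _

theorem stmt8 (ε ε₀ : ℝ) (hε : 0 < ε) (hεε₀ : ε < ε₀) (f f3 : ℝ → ℝ)
    (hf : memWcl ε₀ f f3) (u₂ : ℝ) :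
    (∀ A : ℝ, ∃ m' : ℝ → ℝ,
      (∀ u : ℝ, u < u₂ → HasDerivAt (mAsol ε f A) (m' u) u) ∧
      (∀ u : ℝ, u < u₂ → HasDerivAt m' (mAsol'' ε f3 A u) u)) ∧
    (∀ A : ℝ, (∀ u : ℝ, u < u₂ → mAsol'' ε f3 A u ≤ 0) → A ≤ 0) ∧
    (∀ A : ℝ, A ≤ 0 → ∀ x ∈ parabStrip ε, uRpt ε x < u₂ →
      mAsol ε f 0 (uRpt ε x) * (x.1 - uRpt ε x) + f (uRpt ε x) ≤
        mAsol ε f A (uRpt ε x) * (x.1 - uRpt ε x) + f (uRpt ε x)) := by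
  obtain ⟨hC, h3, -, J1, J2, J3⟩ := hf
  have hd : ContDiff ℝ 1 (deriv f) := by
    have : ContDiff ℝ (1 + 1) f := by simpa [one_add_one_eq_two] using hC
    exact (contDiff_succ_iff_deriv.1 this).2.2
  have hc1 : Continuous (deriv f) := hd.continuous
  have hdd : ∀ x, HasDerivAt (deriv f) (deriv (deriv f) x) x := fun x =>
    (hd.differentiable (by norm_num) x).hasDerivAt
  have hc2 : Continuous (deriv (deriv f)) := hd.continuous_deriv (by norm_num)
  have I1 := aux_integrable hε hεε₀ J1
  have I2 := aux_integrable hε hεε₀ J2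
  have I3 := aux_integrable hε hεε₀ J3
  have E3 := fun u => aux_ibp h3 u (I2 u) (I3 u)
  have E2 := fun u => aux_ibp (g := deriv f) (g3 := deriv (deriv f)) (fun x y _ =>
    (intervalIntegral.integral_eq_sub_of_hasDerivAt (fun x _ => hdd x)
      (hc2.intervalIntegrable _ _)).symm) u (I1 u) (I2 u)
  have hex : ∀ u : ℝ, Real.exp (-u / ε) * Real.exp (u / ε) = 1 := by
    intro u
    rw [← Real.exp_add, ← add_div]; simp
  have hm : ∀ A u, HasDerivAt (mAsol ε f A) (ε⁻¹ * (deriv f u - mAsol ε f A u)) u := by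
    intro A u
    have d1 : HasDerivAt (fun u => Real.exp (-u / ε)) (Real.exp (-u / ε) * (-1 / ε)) u :=
      ((hasDerivAt_id u).neg.div_const ε).exp
    have d2 := ((aux_deriv (h := fun t => deriv f t * Real.exp (t / ε)) (by fun_prop) I1 u).const_mul
      ε⁻¹).const_add A
    refine (d1.mul d2).congr_deriv ?_
    unfold mAsol
    have := hex u
    rw [show (-1:ℝ) / ε = -ε⁻¹ by rw [neg_div, one_div]]
    linear_combination (ε⁻¹ * deriv f u) * this
  refine ⟨fun A => ⟨fun u => ε⁻¹ * (deriv f u - mAsol ε f A u), fun u _ => hm A u, fun u _ => ?_⟩,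
    fun A hA => ?_, fun A hA x hx _ => ?_⟩
  · refine (((hdd u).sub (hm A u)).const_mul ε⁻¹).congr_deriv ?_
    unfold mAsol''
    rw [E3, E2]
    unfold mAsol
    have := hex u
    linear_combination (-ε⁻¹ * deriv (deriv f) u + ε⁻¹ * ε⁻¹ * deriv f u) * this
  · have T : Filter.Tendsto (fun u => ε⁻¹ * A + ∫ t in Iic u, f3 t * Real.exp (t / ε)) Filter.atBot
        (nhds (ε⁻¹ * A + 0)) := (tendsto_integral_Iic_zero Filter.tendsto_id).const_add _
    have : ε⁻¹ * A + 0 ≤ 0 := by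
      refine le_of_tendsto T ?_
      filter_upwards [Filter.eventually_lt_atBot u₂] with u hu
      have h := hA u hu
      unfold mAsol'' at h
      have hp : 0 < ε⁻¹ * Real.exp (-u / ε) := by positivity
      by_contra hcon
      push Not at hcon
      exact absurd h (not_le.2 (mul_pos hp hcon))
    have hp : 0 < ε⁻¹ := by positivity
    by_contra hcon
    push Not at hcon
    linarith [mul_pos hp hcon]
  · have hu : x.1 - uRpt ε x ≤ 0 := by
      unfold uRpt
      have : Real.sqrt (ε ^ 2 - (x.2 - x.1 ^ 2)) ≤ ε := by
        rw [Real.sqrt_le_left hε.le]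
        linarith [hx.1]
      linarith
    have hm0 : mAsol ε f A (uRpt ε x) ≤ mAsol ε f 0 (uRpt ε x) := by
      unfold mAsol
      gcongr
    linarith [mul_le_mul_of_nonpos_right hm0 hu]
end
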